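/- arXiv:2007.05195 — 2 statements merged into one kernel-verified Lean document; each statement's English description precedes it below -/
import Mathlib

section
/- Let G = (V,E) be a bridgeless connected finite multigraph with at least one edge, with |V| = n, |E| = m, and b blocks. Then: (i) (−1)^{m−n+1} F(G,q) > 0 for all real q < 1; (ii) F(G,q) has a root of multiplicity exactly b at q = 1; (iii) (−1)^{m−n+b+1} F(G,q) > 0 for all real q with 1 < q ≤ 32/27. -/
/-- A finite multigraph on vertex type `V` with edge type `E`: each edge `e` has two
(possibly equal) endpoints `fst e` and `snd e`. -/
structure Multigraph (V E : Type) where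
  fst : E → V
  snd : E → V

namespace Multigraph

variable {V E : Type}

/-- `a` and `b` are joined by some edge belonging to the edge set `F`. -/
def edgeRelOn (G : Multigraph V E) (F : Set E) (a b : V) : Prop :=
  ∃ e ∈ F, (G.fst e = a ∧ G.snd e = b) ∨ (G.fst e = b ∧ G.snd e = a)

/-- Reachability in the spanning subgraph `(V, F)`. -/
def Reach (G : Multigraph V E) (F : Set E) : V → V → Prop :=
  Relation.EqvGen (G.edgeRelOn F)

/-- The setoid on `V` whose classes are the connected components of the
spanning subgraph `(V, F)`. -/
def reachSetoid (G : Multigraph V E) (F : Set E) : Setoid V :=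
  Relation.EqvGen.setoid (G.edgeRelOn F)

/-- The number of connected components of the spanning subgraph `(V, F)`. -/
noncomputable def ncomp (G : Multigraph V E) (F : Set E) : ℕ :=
  Nat.card (Quotient (G.reachSetoid F))

/-- The number of connected components of `G`. -/
noncomputable def numComponents (G : Multigraph V E) : ℕ :=
  G.ncomp Set.univ

/-- `G` is connected. -/
def Connected (G : Multigraph V E) : Prop :=
  G.numComponents = 1

/-- An edge is a bridge if deleting it increases the number of connected components. -/
def IsBridge (G : Multigraph V E) (e : E) : Prop :=
  G.numComponents < G.ncomp {e' | e' ≠ e}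

/-- `G` has no bridge. -/
def Bridgeless (G : Multigraph V E) : Prop :=
  ∀ e, ¬ G.IsBridge e

/-- `G` has no loops. -/
def Loopless (G : Multigraph V E) : Prop :=
  ∀ e, G.fst e ≠ G.snd e

/-- Deleting a set `S` of vertices (and all edges meeting `S`). -/
def deleteVerts (G : Multigraph V E) (S : Set V) :
    Multigraph {v // v ∉ S} {e // G.fst e ∉ S ∧ G.snd e ∉ S} where
  fst := fun e => ⟨G.fst e.1, e.2.1⟩
  snd := fun e => ⟨G.snd e.1, e.2.2⟩

/-- A cut-vertex: a vertex whose deletion increases the number of components. -/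
def IsCutVertex (G : Multigraph V E) (x : V) : Prop :=
  G.numComponents < (G.deleteVerts {x}).numComponents

/-- A graph is non-separable if it has at most one vertex and at most one edge, or it is
connected, loopless and has no cut-vertex. -/
def NonSeparable (G : Multigraph V E) : Prop :=
  (Nat.card V ≤ 1 ∧ Nat.card E ≤ 1) ∨
    (G.Connected ∧ G.Loopless ∧ ∀ x, ¬ G.IsCutVertex x)

/-- The degree of a vertex, counted with edge multiplicity; a loop contributes `2`. -/
noncomputable def degree (G : Multigraph V E) (v : V) : ℕ :=
  Nat.card {e | G.fst e = v} + Nat.card {e | G.snd e = v}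

/-- The flow polynomial `F(G,q) = ∑_{E'⊆E} (−1)^{|E|−|E'|} q^{|E'|+c(E')−|V|}`,
where `c(E')` is the number of connected components of the spanning subgraph `(V,E')`. -/
noncomputable def flowPoly (G : Multigraph V E) [Finite V] [Finite E] : Polynomial ℝ :=
  letI : Fintype E := Fintype.ofFinite E
  ∑ E' : Finset E, (-1 : Polynomial ℝ) ^ (Nat.card E - E'.card) *
    Polynomial.X ^ (E'.card + G.ncomp ↑E' - Nat.card V)

/-- A subgraph of a multigraph: a set of vertices and a set of edges with both
endpoints among those vertices. -/
structure Subgraph (G : Multigraph V E) where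
  verts : Set V
  edges : Set E
  fst_mem : ∀ ⦃e⦄, e ∈ edges → G.fst e ∈ verts
  snd_mem : ∀ ⦃e⦄, e ∈ edges → G.snd e ∈ verts

/-- A subgraph, viewed as a multigraph in its own right. -/
def Subgraph.toMultigraph {G : Multigraph V E} (H : G.Subgraph) :
    Multigraph H.verts H.edges where
  fst := fun e => ⟨G.fst e.1, H.fst_mem e.2⟩
  snd := fun e => ⟨G.snd e.1, H.snd_mem e.2⟩

/-- `H` is a connected component of `G`: its vertex set is the set of vertices reachable
from some vertex, and its edges are all the edges of `G` joining its vertices. -/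
def IsComponent {G : Multigraph V E} (H : G.Subgraph) : Prop :=
  (∃ v ∈ H.verts, ∀ u, u ∈ H.verts ↔ G.Reach Set.univ v u) ∧
    ∀ e, e ∈ H.edges ↔ (G.fst e ∈ H.verts ∧ G.snd e ∈ H.verts)

/-- `H` is a block of `G`: a maximal non-separable subgraph. -/
def IsBlock {G : Multigraph V E} (H : G.Subgraph) : Prop :=
  H.toMultigraph.NonSeparable ∧
    ∀ H' : G.Subgraph, H'.toMultigraph.NonSeparable →
      H.verts ⊆ H'.verts → H.edges ⊆ H'.edges → H' = H

/-- A trivial block: a single vertex and no edges. -/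
def Subgraph.IsTrivial {G : Multigraph V E} (H : G.Subgraph) : Prop :=
  (∃ v, H.verts = {v}) ∧ H.edges = ∅

/-- An orientation of a multigraph: each edge is given a tail and a head,
consistent with its two endpoints. -/
structure Orientation (G : Multigraph V E) where
  tail : E → V
  head : E → V
  consistent : ∀ e, (tail e = G.fst e ∧ head e = G.snd e) ∨
    (tail e = G.snd e ∧ head e = G.fst e)

open Classical in
/-- A `Γ`-flow on an orientation `D`: at every vertex, the sum of the values on
the arcs with that tail equals the sum of the values on the arcs with that head. -/
noncomputable def Orientation.IsFlow {G : Multigraph V E} [Fintype E]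
    (D : G.Orientation) {Γ : Type} [AddCommGroup Γ] (φ : E → Γ) : Prop :=
  ∀ v : V, ∑ e ∈ Finset.univ.filter (fun e => D.tail e = v), φ e =
    ∑ e ∈ Finset.univ.filter (fun e => D.head e = v), φ e

/-- Deleting an edge. -/
def deleteEdge (G : Multigraph V E) (e₀ : E) : Multigraph V {e // e ≠ e₀} where
  fst := fun e => G.fst e.1
  snd := fun e => G.snd e.1

/-- Adding a new edge joining `x` and `y`. -/
def addEdge (G : Multigraph V E) (x y : V) : Multigraph V (E ⊕ Unit) where
  fst := Sum.elim G.fst fun _ => x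
  snd := Sum.elim G.snd fun _ => y

/-- Contracting a set `F` of edges: vertices joined through `F` are identified,
and the edges of `F` are removed. -/
def contract (G : Multigraph V E) (F : Set E) :
    Multigraph (Quotient (G.reachSetoid F)) {e // e ∉ F} where
  fst := fun e => Quotient.mk _ (G.fst e.1)
  snd := fun e => Quotient.mk _ (G.snd e.1)

/-- The number of proper colourings of the vertices of `G` with `n` colours. -/
noncomputable def properColorings (G : Multigraph V E) (n : ℕ) : ℕ :=
  Nat.card {f : V → Fin n // ∀ e, f (G.fst e) ≠ f (G.snd e)}

/-- An isomorphism of multigraphs. -/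
structure Iso {V' E' : Type} (G : Multigraph V E) (G' : Multigraph V' E') where
  vmap : V ≃ V'
  emap : E ≃ E'
  ends : ∀ e, (G'.fst (emap e) = vmap (G.fst e) ∧ G'.snd (emap e) = vmap (G.snd e)) ∨
    (G'.fst (emap e) = vmap (G.snd e) ∧ G'.snd (emap e) = vmap (G.fst e))

open Classical in
/-- Subdividing the edge `e₀`: it is replaced by a path of length two through a new vertex. -/
noncomputable def subdivide (G : Multigraph V E) (e₀ : E) :
    Multigraph (V ⊕ Unit) (E ⊕ Unit) where
  fst := Sum.elim (fun e => Sum.inl (G.fst e)) fun _ => Sum.inr ()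
  snd := Sum.elim (fun e => if e = e₀ then Sum.inr () else Sum.inl (G.snd e))
    fun _ => Sum.inl (G.snd e₀)

/-- `G` is a subdivision of `H`. -/
inductive IsSubdivisionOf :
    {V E V' E' : Type} → Multigraph V E → Multigraph V' E' → Prop
  | of_iso {V E V' E'} {G : Multigraph V E} {H : Multigraph V' E'} :
      Iso G H → IsSubdivisionOf G H
  | step {V E V' E'} {G : Multigraph V E} {H : Multigraph V' E'} (e : E) :
      IsSubdivisionOf G H → IsSubdivisionOf (G.subdivide e) H
  | iso_left {V₁ E₁ V₂ E₂ V' E'} {G₁ : Multigraph V₁ E₁} {G₂ : Multigraph V₂ E₂}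
      {H : Multigraph V' E'} :
      Iso G₁ G₂ → IsSubdivisionOf G₂ H → IsSubdivisionOf G₁ H

/-- A multigraph is 3-connected if it has at least 4 vertices and remains connected
after deleting any set of fewer than 3 vertices. -/
def ThreeConnected (G : Multigraph V E) : Prop :=
  4 ≤ Nat.card V ∧ ∀ S : Set V, S.ncard < 3 → (G.deleteVerts S).Connected

/-- `G` is (isomorphic to) the multigraph `Z_k` with two vertices joined by `k`
parallel edges. -/
def IsZk (G : Multigraph V E) (k : ℕ) : Prop :=
  Nat.card V = 2 ∧ Nat.card E = k ∧ G.Loopless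

/-- `G` is essentially 3-connected: a subdivision of a 3-connected graph,
or `Z_k` for some `k ≥ 3`. -/
def EssentiallyThreeConnected (G : Multigraph V E) : Prop :=
  (∃ (V' E' : Type) (H : Multigraph V' E'), H.ThreeConnected ∧ G.IsSubdivisionOf H) ∨
    ∃ k, 3 ≤ k ∧ G.IsZk k

end Multigraph

section

/-- A rank function on finite subsets of `α`. -/
structure RankFn (α : Type) [DecidableEq α] where
  r : Finset α → ℕ
  r_empty : r ∅ = 0
  r_le : ∀ e A, r A ≤ r (insert e A)
  r_ge : ∀ e A, r (insert e A) ≤ r A + 1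
  r_cl : ∀ e A B, A ⊆ B → r (insert e A) = r A → r (insert e B) = r B

namespace RankFn

variable {α : Type} [DecidableEq α]

lemma r_mono (M : RankFn α) {A B : Finset α} (h : A ⊆ B) : M.r A ≤ M.r B := by
  have key : ∀ C : Finset α, M.r A ≤ M.r (A ∪ C) := by
    intro C
    induction C using Finset.induction_on with
    | empty => simp
    | insert c C _ ih =>
      rw [Finset.union_insert]
      exact ih.trans (M.r_le _ _)
  have := key B
  rwa [Finset.union_eq_right.mpr h] at this

lemma r_diff (M : RankFn α) {A B : Finset α} (h : A ⊆ B) (C : Finset α) :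
    M.r (B ∪ C) + M.r A ≤ M.r (A ∪ C) + M.r B := by
  induction C using Finset.induction_on with
  | empty => simp; omega
  | insert c C _ ih =>
    rw [Finset.union_insert, Finset.union_insert]
    have h1 := M.r_le c (A ∪ C)
    have h2 := M.r_ge c (B ∪ C)
    by_cases h3 : M.r (insert c (A ∪ C)) = M.r (A ∪ C)
    · have := M.r_cl c (A ∪ C) (B ∪ C) (Finset.union_subset_union_left h) h3
      omega
    · omega

lemma submod (M : RankFn α) (A B : Finset α) :
    M.r (A ∪ B) + M.r (A ∩ B) ≤ M.r A + M.r B := by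
  have := M.r_diff (Finset.inter_subset_left : A ∩ B ⊆ A) B
  rw [Finset.union_eq_right.mpr (Finset.inter_subset_right : A ∩ B ⊆ B)] at this
  omega

lemma r_union_le (M : RankFn α) (A B : Finset α) : M.r (A ∪ B) ≤ M.r A + M.r B := by
  have := M.submod A B; omega

lemma r_le_card (M : RankFn α) (A : Finset α) : M.r A ≤ A.card := by
  induction A using Finset.induction_on with
  | empty => simp [M.r_empty]
  | insert c C hc ih =>
    rw [Finset.card_insert_of_notMem hc]
    have := M.r_ge c C
    omega

lemma r_single_le (M : RankFn α) (e : α) : M.r {e} ≤ 1 := by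
  simpa using M.r_le_card {e}

lemma r_single_le_insert (M : RankFn α) (e : α) (A : Finset α) : M.r {e} ≤ M.r (insert e A) :=
  M.r_mono (by simp)

/-- Contraction of an element. -/
def contr (M : RankFn α) (e : α) : RankFn α where
  r A := M.r (insert e A) - M.r {e}
  r_empty := by simp
  r_le f A := by
    rw [Finset.insert_comm]
    have := M.r_le f (insert e A)
    omega
  r_ge f A := by
    rw [Finset.insert_comm]
    have := M.r_ge f (insert e A)
    omega
  r_cl f A B h h2 := by
    rw [Finset.insert_comm] at h2 ⊢
    have h3 := M.r_single_le_insert e A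
    have h5 := M.r_le f (insert e A)
    have h4 := M.r_cl f (insert e A) (insert e B) (Finset.insert_subset_insert _ h) (by omega)
    rw [h4]

lemma contr_r (M : RankFn α) (e : α) (A : Finset α) :
    (M.contr e).r A + M.r {e} = M.r (insert e A) := by
  have h3 := M.r_single_le_insert e A
  simp only [contr]
  omega

/-- Connectedness of the restriction to `S`. -/
def Conn (M : RankFn α) (S : Finset α) : Prop :=
  ∀ A ⊆ S, A.Nonempty → A ≠ S → M.r S < M.r A + M.r (S \ A)

/-- `X` is 2-separating. -/
def Sep1 (M : RankFn α) (S X : Finset α) : Prop := M.r X + M.r (S \ X) ≤ M.r S + 1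

lemma uncross (M : RankFn α) {S X Y : Finset α} (hS : M.Conn S) (hX : X ⊆ S) (hY : Y ⊆ S)
    (hXY : X ∪ Y ≠ S) (hne : X.Nonempty) (h1 : M.Sep1 S X) (h2 : M.Sep1 S Y) :
    M.Sep1 S (X ∩ Y) := by
  have a := M.submod X Y
  have b := M.submod (S \ X) (S \ Y)
  rw [show S \ X ∪ S \ Y = S \ (X ∩ Y) by ext x; simp; tauto,
    show S \ X ∩ (S \ Y) = S \ (X ∪ Y) by ext x; simp; tauto] at b
  have c := hS (X ∪ Y) (Finset.union_subset hX hY) (hne.mono Finset.subset_union_left) hXY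
  unfold Sep1 at *
  omega

lemma Conn.single (M : RankFn α) {S : Finset α} (hS : M.Conn S) (h2 : 2 ≤ S.card) {e : α}
    (he : e ∈ S) : M.r {e} = 1 ∧ M.r (S.erase e) = M.r S := by
  have h := hS {e} (by simpa using he) (by simp) (by rintro rfl; simp at h2)
  rw [Finset.sdiff_singleton_eq_erase] at h
  have h3 := M.r_single_le e
  have h4 := M.r_mono (Finset.erase_subset e S)
  omega

lemma not_conn (M : RankFn α) {S : Finset α} (h : ¬ M.Conn S) :
    ∃ A ⊆ S, A.Nonempty ∧ A ≠ S ∧ M.r A + M.r (S \ A) ≤ M.r S := by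
  unfold Conn at h
  push Not at h
  obtain ⟨A, h1, h2, h3, h4⟩ := h
  exact ⟨A, h1, h2, h3, h4⟩

lemma not_good (M : RankFn α) {S : Finset α} (hS : M.Conn S) (h2 : 2 ≤ S.card) {e : α}
    (he : e ∈ S) (hg : ¬ (M.Conn (S.erase e) ∧ (M.contr e).Conn (S.erase e))) :
    ∃ U T : Finset α, U ∪ T = S.erase e ∧ Disjoint U T ∧ U.Nonempty ∧ T.Nonempty ∧
      M.Sep1 S U ∧ M.Sep1 S T ∧ M.Sep1 S (insert e U) ∧ M.Sep1 S (insert e T) := by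
  obtain ⟨he1, he2⟩ := hS.single M h2 he
  have key : ∃ A ⊆ S.erase e, A.Nonempty ∧ A ≠ S.erase e ∧
      M.r (insert e A) + M.r (S.erase e \ A) ≤ M.r S + 1 ∧
      M.r A + M.r (insert e (S.erase e \ A)) ≤ M.r S + 1 := by
    by_cases h : M.Conn (S.erase e)
    · have h' : ¬ (M.contr e).Conn (S.erase e) := fun h' => hg ⟨h, h'⟩
      obtain ⟨A, h1, h2, h3, h4⟩ := (M.contr e).not_conn h'
      refine ⟨A, h1, h2, h3, ?_, ?_⟩
      all_goals
        have a := M.contr_r e A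
        have b := M.contr_r e (S.erase e \ A)
        have c := M.contr_r e (S.erase e)
        rw [Finset.insert_erase he] at c
        have d := M.r_le e A
        have d' := M.r_le e (S.erase e \ A)
        omega
    · obtain ⟨A, h1, h2, h3, h4⟩ := M.not_conn h
      refine ⟨A, h1, h2, h3, ?_, ?_⟩
      · have := M.r_ge e A; omega
      · have := M.r_ge e (S.erase e \ A); omega
  obtain ⟨A, h1, hne, h3, h4, h5⟩ := key
  have heA : e ∉ A := fun h => by simpa using h1 h
  have e1 : S \ A = insert e (S.erase e \ A) := by
    ext x; simp only [Finset.mem_sdiff, Finset.mem_insert, Finset.mem_erase]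
    by_cases hx : x = e
    · subst hx; simp [he, heA]
    · simp [hx]
  have e2 : S \ (S.erase e \ A) = insert e A := by
    ext x; simp only [Finset.mem_sdiff, Finset.mem_insert, Finset.mem_erase]
    by_cases hx : x = e
    · subst hx; simp [he]
    · have := @h1 x
      simp [hx] at this ⊢
      tauto
  have e3 : S \ (insert e A) = S.erase e \ A := by
    ext x; simp only [Finset.mem_sdiff, Finset.mem_insert, Finset.mem_erase]; tauto
  have e4 : S \ (insert e (S.erase e \ A)) = A := by
    rw [← e1]; exact Finset.sdiff_sdiff_eq_self (h1.trans (Finset.erase_subset _ _))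
  refine ⟨A, S.erase e \ A, Finset.union_sdiff_of_subset h1, Finset.disjoint_sdiff, hne, ?_,
    ?_, ?_, ?_, ?_⟩
  · rw [Finset.sdiff_nonempty]
    intro h; exact h3 (h1.antisymm h)
  · unfold Sep1; rw [e1]; exact h5
  · unfold Sep1; rw [e2]; omega
  · unfold Sep1; rw [e3]; exact h4
  · unfold Sep1; rw [e4]; omega

lemma good_or_pair (M : RankFn α) {S : Finset α} (hS : M.Conn S) (h3 : 3 ≤ S.card) :
    (∃ e ∈ S, ∃ f ∈ S, e ≠ f ∧ M.Sep1 S {e, f}) ∨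
    (∃ e ∈ S, M.Conn (S.erase e) ∧ (M.contr e).Conn (S.erase e)) := by
  classical
  by_contra hcon
  push Not at hcon
  obtain ⟨hpair, hgood⟩ := hcon
  let F := S.powerset.filter (fun X => 2 ≤ X.card ∧ M.Sep1 S X)
  have hSF : S ∈ F := by
    refine Finset.mem_filter.mpr ⟨Finset.mem_powerset.mpr subset_rfl, by omega, ?_⟩
    simp [Sep1, M.r_empty]
  obtain ⟨X, hXF, hmin⟩ := Finset.exists_min_image F Finset.card ⟨S, hSF⟩
  simp only [F, Finset.mem_filter, Finset.mem_powerset] at hXF hmin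
  obtain ⟨hXS, hX2, hXsep⟩ := hXF
  have hX3 : 3 ≤ X.card := by
    by_contra hlt
    have : X.card = 2 := by omega
    obtain ⟨e, f, hef, rfl⟩ := Finset.card_eq_two.mp this
    exact hpair e (hXS (by simp)) f (hXS (by simp)) hef hXsep
  have hmin' : ∀ Y, Y ⊆ X → Y.card < X.card → M.Sep1 S Y → Y.card ≤ 1 := by
    intro Y hY hc hs
    by_contra h
    have := hmin Y ⟨hY.trans hXS, by omega, hs⟩
    omega
  obtain ⟨e, heX⟩ : X.Nonempty := Finset.card_pos.mp (by omega)
  have heS := hXS heX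
  obtain ⟨U, T, hUT, hdis, hU, hT, sU, sT, sU', sT'⟩ :=
    M.not_good hS (by omega) heS (fun h => hgood e heS h.1 h.2)
  have heU : e ∉ U := fun h => by
    have : e ∈ S.erase e := hUT ▸ Finset.mem_union_left _ h
    simp at this
  have heT : e ∉ T := fun h => by
    have : e ∈ S.erase e := hUT ▸ Finset.mem_union_right _ h
    simp at this
  have hUS : U ⊆ S := fun x hx => Finset.mem_of_mem_erase (hUT ▸ Finset.mem_union_left _ hx)
  have hTS : T ⊆ S := fun x hx => Finset.mem_of_mem_erase (hUT ▸ Finset.mem_union_right _ hx)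
  have mem_or : ∀ x ∈ S, x = e ∨ x ∈ U ∨ x ∈ T := by
    intro x hx
    by_cases h : x = e
    · exact Or.inl h
    · right
      have : x ∈ U ∪ T := hUT ▸ Finset.mem_erase.mpr ⟨h, hx⟩
      simpa using this
  -- the unions are proper
  have prop : ∀ T : Finset α, e ∉ T → T.Nonempty → M.Sep1 S T → M.Sep1 S (insert e T) → T ⊆ S →
      ¬ T ⊆ X := by
    intro T heT hT sT sT' hTS hTX
    have hc : (insert e T).card = T.card + 1 := Finset.card_insert_of_notMem heT
    have hp : 0 < T.card := Finset.card_pos.mpr hT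
    have h1 : insert e T ⊆ X := Finset.insert_subset heX hTX
    have hle := Finset.card_le_card h1
    by_cases hlt : (insert e T).card < X.card
    · have := hmin' _ h1 hlt sT'
      omega
    · have := hmin' T hTX (by omega) sT
      omega
  have hXU : X ∪ U ≠ S := by
    intro h
    refine prop T heT hT sT sT' hTS ?_
    intro x hx
    have : x ∈ X ∪ U := h ▸ hTS hx
    rcases Finset.mem_union.mp this with h | h
    · exact h
    · exact absurd hx (Finset.disjoint_left.mp hdis h)
  have hXT : X ∪ T ≠ S := by
    intro h
    refine prop U heU hU sU sU' hUS ?_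
    intro x hx
    have : x ∈ X ∪ T := h ▸ hUS hx
    rcases Finset.mem_union.mp this with h | h
    · exact h
    · exact absurd h (Finset.disjoint_left.mp hdis hx)
  have c1 := M.uncross hS hXS hUS hXU ⟨e, heX⟩ hXsep sU
  have c2 := M.uncross hS hXS hTS hXT ⟨e, heX⟩ hXsep sT
  have c3 := M.uncross hS hXS (Finset.insert_subset heS hTS)
    (by rw [Finset.union_insert, Finset.insert_eq_of_mem (Finset.mem_union_left _ heX)]; exact hXT)
    ⟨e, heX⟩ hXsep sT'
  have d : X.card = (X ∩ U).card + (X ∩ T).card + 1 := by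
    have : X = insert e ((X ∩ U) ∪ (X ∩ T)) := by
      ext x
      have := mem_or x
      have := @hXS x
      simp only [Finset.mem_insert, Finset.mem_union, Finset.mem_inter]
      constructor
      · intro h; have := this h; tauto
      · rintro (rfl | h)
        · exact heX
        · tauto
    conv_lhs => rw [this]
    rw [Finset.card_insert_of_notMem (by simp [heU, heT]), Finset.card_union_of_disjoint]
    exact hdis.mono Finset.inter_subset_right Finset.inter_subset_right
  have d3 : (X ∩ insert e T).card = (X ∩ T).card + 1 := by
    rw [Finset.inter_insert_of_mem heX, Finset.card_insert_of_notMem (by simp [heT])]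
  have b1 := hmin' _ Finset.inter_subset_left (by omega) c1
  have b2 := hmin' _ Finset.inter_subset_left (by omega) c2
  by_cases hlt : (X ∩ insert e T).card < X.card
  · have b3 := hmin' _ Finset.inter_subset_left hlt c3
    omega
  · omega

/-- Induction principle for connected rank functions. -/
theorem conn_induction (P : RankFn α → Finset α → Prop)
    (base : ∀ M e f, e ≠ f → M.r {e} = 1 → M.r {f} = 1 → M.r {e, f} = 1 → P M {e, f})
    (par : ∀ M S e f, e ∈ S → f ∉ S → 2 ≤ S.card → M.r {e} = 1 → M.r {f} = 1 → M.r {e, f} = 1 →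
      P M S → P M (insert f S))
    (ser : ∀ M S e f, e ∈ S → f ∉ S → 2 ≤ S.card → M.r {f} = 1 → 
      M.r S = M.r (S.erase e) + 1 →
      M.r (insert f (S.erase e)) = M.r (S.erase e) + 1 →
      M.r (insert f S) = M.r (S.erase e) + 1 → P (M.contr f) S → P M (insert f S))
    (good : ∀ M S e, e ∉ S → 2 ≤ S.card → M.r {e} = 1 → M.r (insert e S) = M.r S →
      P M S → P (M.contr e) S → P M (insert e S)) :
    ∀ M S, 2 ≤ S.card → M.Conn S → P M S := by
  have main : ∀ n : ℕ, ∀ M : RankFn α, ∀ S : Finset α, S.card = n → 2 ≤ n → M.Conn S → P M S := by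
    intro n
    induction n with
    | zero => intro M S _ h; omega
    | succ n ih =>
      intro M S hc h2 hS
      by_cases hn : n = 1
      · subst hn
        obtain ⟨e, f, hef, rfl⟩ := Finset.card_eq_two.mp hc
        have h1 := hS.single M (by omega) (e := e) (by simp)
        have h2 := hS.single M (by omega) (e := f) (by simp)
        refine base M e f hef h1.1 h2.1 ?_
        rw [← h1.2, Finset.erase_insert (by simpa using hef)]
        exact h2.1
      rcases M.good_or_pair hS (by omega) with ⟨e, he, f, hf, hef, hsep⟩ | ⟨e, he, hg⟩
      · obtain ⟨e1, e2⟩ := hS.single M (by omega) he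
        obtain ⟨f1, f2⟩ := hS.single M (by omega) hf
        have hcard : (S.erase f).card = n := by rw [Finset.card_erase_of_mem hf]; omega
        have heS' : e ∈ S.erase f := Finset.mem_erase.mpr ⟨hef, he⟩
        have hSf : insert f (S.erase f) = S := Finset.insert_erase hf
        have hSe : insert e ((S.erase f).erase e) = S.erase f := Finset.insert_erase heS'
        have hSe' : insert f ((S.erase f).erase e) = S.erase e := by
          rw [Finset.erase_right_comm]
          exact Finset.insert_erase (Finset.mem_erase.mpr ⟨hef.symm, hf⟩)
        have hdiff : S \ {e, f} = (S.erase f).erase e := by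
          ext x; simp; tauto
        unfold Sep1 at hsep
        rw [hdiff] at hsep
        have g1 : M.r {e, f} ≤ M.r {f} + 1 := M.r_ge _ _
        have g2 : M.r {f} ≤ M.r {e, f} := M.r_le _ _
        by_cases hpar : M.r {e, f} = 1
        · rw [← hSf]
          refine par M _ e f heS' (Finset.notMem_erase _ _) (by omega) e1 f1 hpar ?_
          refine ih M _ hcard (by omega) ?_
          -- connectedness of the deletion
          have aux : ∀ A ⊆ S.erase f, e ∈ A → A ≠ S.erase f →
              M.r (S.erase f) < M.r A + M.r (S.erase f \ A) := by
            intro A hA heA hne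
            have hfA : f ∉ A := fun h => by simpa using hA h
            have hr : M.r (insert f A) = M.r A :=
              M.r_cl f {e} A (by simpa using heA) (by rw [Finset.pair_comm, hpar, e1])
            have := hS (insert f A) (Finset.insert_subset hf (hA.trans (Finset.erase_subset _ _)))
              (by simp) (by
                intro h; apply hne; rw [← h, Finset.erase_insert hfA])
            rw [hr] at this
            have hh : S \ insert f A = S.erase f \ A := by
              ext x; simp; tauto
            rw [hh] at this
            omega
          intro A hA hAne hne
          by_cases heA : e ∈ A
          · exact aux A hA heA hne
          · have := aux (S.erase f \ A) Finset.sdiff_subset (by simp [heA, hef, he]) (by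
              intro h
              obtain ⟨x, hx⟩ := hAne
              have := hA hx
              rw [← h] at this
              simp [hx] at this)
            rw [Finset.sdiff_sdiff_eq_self hA] at this
            omega
        · have k1 := M.r_ge e ((S.erase f).erase e)
          have k2 := M.r_ge f ((S.erase f).erase e)
          rw [hSe] at k1
          rw [hSe'] at k2
          have hrf : M.r (insert f ((S.erase f).erase e)) = M.r ((S.erase f).erase e) + 1 := by
            rw [hSe']; omega
          rw [← hSf]
          refine ser M _ e f heS' (Finset.notMem_erase _ _) (by omega) f1 (by omega) hrf
            (by rw [hSf]; omega) ?_
          refine ih _ _ hcard (by omega) ?_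
          have cS := M.contr_r f (S.erase f)
          rw [hSf] at cS
          have aux : ∀ A ⊆ S.erase f, e ∈ A → A ≠ S.erase f →
              (M.contr f).r (S.erase f) < (M.contr f).r A + (M.contr f).r (S.erase f \ A) := by
            intro A hA heA hne
            have hfA : f ∉ A := fun h => by simpa using hA h
            have cA := M.contr_r f A
            have cB := M.contr_r f (S.erase f \ A)
            have hB : M.r (insert f (S.erase f \ A)) = M.r (S.erase f \ A) + 1 := by
              have t1 := M.r_ge f (S.erase f \ A)
              have t2 := M.r_le f (S.erase f \ A)
              by_contra hne'
              have := M.r_cl f (S.erase f \ A) ((S.erase f).erase e) (by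
                intro x hx
                simp only [Finset.mem_sdiff, Finset.mem_erase] at hx ⊢
                refine ⟨?_, hx.1⟩
                rintro rfl; exact hx.2 heA) (by omega)
              omega
            have := hS (insert f A) (Finset.insert_subset hf (hA.trans (Finset.erase_subset _ _)))
              (by simp) (by
                intro h; apply hne; rw [← h, Finset.erase_insert hfA])
            have hh : S \ insert f A = S.erase f \ A := by
              ext x; simp; tauto
            rw [hh] at this
            omega
          intro A hA hAne hne
          by_cases heA : e ∈ A
          · exact aux A hA heA hne
          · have := aux (S.erase f \ A) Finset.sdiff_subset (by simp [heA, hef, he]) (by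
              intro h
              obtain ⟨x, hx⟩ := hAne
              have := hA hx
              rw [← h] at this
              simp [hx] at this)
            rw [Finset.sdiff_sdiff_eq_self hA] at this
            omega
      · have hcard : (S.erase e).card = n := by rw [Finset.card_erase_of_mem he]; omega
        obtain ⟨e1, e2⟩ := hS.single M (by omega) he
        rw [← Finset.insert_erase he]
        refine good M _ e (Finset.notMem_erase _ _) (by omega) e1
          (by rw [Finset.insert_erase he, e2]) ?_ ?_
        · exact ih _ _ hcard (by omega) hg.1
        · exact ih _ _ hcard (by omega) hg.2
  intro M S h hS
  exact main S.card M S rfl h hS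

end RankFn

end

section
open Polynomial

namespace RankFn

variable {α : Type} [DecidableEq α]

/-- The flow polynomial of a rank function on `S`. -/
noncomputable def fp (M : RankFn α) (S : Finset α) : ℝ[X] :=
  ∑ A ∈ S.powerset, (-1 : ℝ[X]) ^ (S.card - A.card) * X ^ (A.card - M.r A)

lemma fp_insert (M : RankFn α) {S : Finset α} {e : α} (he : e ∉ S) :
    M.fp (insert e S) = (∑ A ∈ S.powerset, (-1 : ℝ[X]) ^ (S.card - A.card) *
      X ^ (A.card + 1 - M.r (insert e A))) - M.fp S := by
  unfold fp
  rw [Finset.sum_powerset_insert he, add_comm, sub_eq_add_neg, ← Finset.sum_neg_distrib]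
  congr 1
  · apply Finset.sum_congr rfl
    intro A hA
    have hA' := Finset.mem_powerset.mp hA
    rw [Finset.card_insert_of_notMem he, Finset.card_insert_of_notMem (fun h => he (hA' h))]
    congr 2
    omega
  · apply Finset.sum_congr rfl
    intro A hA
    have hA' := Finset.card_le_card (Finset.mem_powerset.mp hA)
    rw [Finset.card_insert_of_notMem he, Nat.sub_add_comm hA', pow_succ]
    ring

lemma fp_nonloop (M : RankFn α) {S : Finset α} {e : α} (he : e ∉ S) (h1 : M.r {e} = 1) :
    M.fp (insert e S) = (M.contr e).fp S - M.fp S := by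
  rw [fp_insert M he]
  congr 1
  apply Finset.sum_congr rfl
  intro A hA
  have := M.contr_r e A
  congr 2
  omega

lemma fp_loop (M : RankFn α) {S : Finset α} {e : α} (he : e ∉ S) (h1 : M.r {e} = 0) :
    M.fp (insert e S) = (X - 1) * M.fp S := by
  rw [fp_insert M he, sub_mul, one_mul]
  congr 1
  unfold fp
  rw [Finset.mul_sum]
  apply Finset.sum_congr rfl
  intro A hA
  have := M.r_cl e ∅ A (by simp) (by simp [h1, M.r_empty])
  have h2 := M.r_le_card A
  rw [this, Nat.sub_add_comm h2, pow_succ]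
  ring

lemma fp_coloop (M : RankFn α) {S : Finset α} {e : α} (he : e ∉ S)
    (h1 : M.r (insert e S) = M.r S + 1) : M.fp (insert e S) = 0 := by
  rw [fp_insert M he, sub_eq_zero]
  apply Finset.sum_congr rfl
  intro A hA
  have h2 : M.r (insert e A) = M.r A + 1 := by
    have t1 := M.r_ge e A
    have t2 := M.r_le e A
    by_contra hne
    have := M.r_cl e A S (Finset.mem_powerset.mp hA) (by omega)
    omega
  rw [h2]
  congr 2
  omega

/-- Positivity below `1`. -/
theorem fp_pos_lt_one {q : ℝ} (hq : q < 1) : ∀ n : ℕ, ∀ M : RankFn α, ∀ S : Finset α,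
    S.card = n → (∀ e ∈ S, M.r (S.erase e) = M.r S) →
    0 < (-1 : ℝ) ^ (S.card - M.r S) * (M.fp S).eval q := by
  intro n
  induction n with
  | zero =>
    intro M S hS _
    rw [Finset.card_eq_zero] at hS
    subst hS
    simp [fp]
  | succ n ih =>
    intro M S hc hcl
    obtain ⟨e, he⟩ : S.Nonempty := Finset.card_pos.mp (by omega)
    obtain ⟨T, heT, rfl⟩ : ∃ T, e ∉ T ∧ insert e T = S :=
      ⟨S.erase e, Finset.notMem_erase _ _, Finset.insert_erase he⟩
    have hcT : T.card = n := by rw [Finset.card_insert_of_notMem heT] at hc; omega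
    have hrT : M.r (insert e T) = M.r T := by
      have := hcl e he
      rw [Finset.erase_insert heT] at this
      exact this.symm
    have hle := M.r_le_card T
    rw [hc, hrT, show n + 1 - M.r T = (n - M.r T) + 1 by omega]
    have er : ∀ f ∈ T, (insert e T).erase f = insert e (T.erase f) := by
      intro f hf
      rw [Finset.erase_insert_of_ne]
      rintro rfl; exact heT hf
    rcases Nat.eq_zero_or_pos (M.r {e}) with h0 | h1
    · rw [fp_loop M heT h0]
      have := ih M T hcT (by
        intro f hf
        have a := hcl f (Finset.mem_insert_of_mem hf)
        rw [er f hf] at a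
        rwa [M.r_cl e ∅ _ (by simp) (by simp [h0, M.r_empty]), hrT] at a)
      rw [hcT] at this
      simp only [eval_mul, eval_sub, eval_X, eval_one, pow_succ]
      nlinarith
    · have h1 : M.r {e} = 1 := le_antisymm (M.r_single_le e) h1
      rw [fp_nonloop M heT h1]
      have i1 := ih (M.contr e) T hcT (by
        intro f hf
        have a := hcl f (Finset.mem_insert_of_mem hf)
        rw [er f hf] at a
        have b := M.contr_r e T
        have c := M.contr_r e (T.erase f)
        omega)
      have b := M.contr_r e T
      rw [hcT, show n - (M.contr e).r T = (n - M.r T) + 1 by omega] at i1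
      have i2 : 0 ≤ (-1 : ℝ) ^ (n - M.r T) * (M.fp T).eval q := by
        by_cases hT : ∀ f ∈ T, M.r (T.erase f) = M.r T
        · have := ih M T hcT hT
          rw [hcT] at this
          exact this.le
        · push Not at hT
          obtain ⟨f, hf, hne⟩ := hT
          have : M.fp T = 0 := by
            rw [← Finset.insert_erase hf]
            apply fp_coloop M (Finset.notMem_erase _ _)
            have t1 := M.r_ge f (T.erase f)
            have t2 := M.r_le f (T.erase f)
            rw [Finset.insert_erase hf] at *
            omega
          rw [this]; simp
      rw [pow_succ] at i1 ⊢
      simp only [eval_sub]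
      nlinarith

lemma fp_eval_one (M : RankFn α) {S : Finset α} (hS : S.Nonempty) : (M.fp S).eval 1 = 0 := by
  obtain ⟨e, he⟩ := hS
  rw [← Finset.insert_erase he, fp_insert M (Finset.notMem_erase _ _)]
  simp [fp, eval_finsetSum]

/-- The derivative at one has a definite sign. -/
theorem fp_deriv_one : ∀ (M : RankFn α) (S : Finset α), 2 ≤ S.card → M.Conn S →
    0 < (-1 : ℝ) ^ (S.card - M.r S + 1) * (derivative (M.fp S)).eval 1 := by
  apply conn_induction
  · intro M e f hef he hf hr
    have h1 : e ∉ ({f} : Finset α) := by simpa using hef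
    rw [Finset.card_pair hef, hr, fp_nonloop M h1 he]
    rw [show ({f} : Finset α) = insert f ∅ from rfl,
      fp_loop (M.contr e) (by simp) (by
        have := M.contr_r e {f}
        omega),
      fp_coloop M (by simp) (by simp [hf, M.r_empty])]
    simp [fp, RankFn.r_empty]
  · intro M S e f heS hfS h2 he hf hr ih
    have hrf : M.r (insert f S) = M.r S :=
      M.r_cl f {e} S (by simpa using heS) (by rw [Finset.pair_comm, hr, he])
    have hle := M.r_le_card S
    rw [fp_nonloop M hfS hf, Finset.card_insert_of_notMem hfS, hrf]
    have h0 : (derivative ((M.contr f).fp S)).eval 1 = 0 := by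
      rw [← Finset.insert_erase heS, fp_loop (M.contr f) (Finset.notMem_erase _ _) (by
        have := M.contr_r f {e}
        rw [Finset.pair_comm] at this
        omega)]
      have := (M.contr f).fp_eval_one (S := S.erase e) (by
        rw [← Finset.card_pos, Finset.card_erase_of_mem heS]; omega)
      simp [this]
    rw [show S.card + 1 - M.r S + 1 = (S.card - M.r S + 1) + 1 by omega, pow_succ]
    simp only [derivative_sub, eval_sub, h0]
    linarith
  · intro M S e f heS hfS h2 hf h3 h4 h5 ih
    rw [fp_nonloop M hfS hf]
    have : M.fp S = 0 := by
      have := fp_coloop M (Finset.notMem_erase e S) (by rw [Finset.insert_erase heS]; exact h3)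
      rwa [Finset.insert_erase heS] at this
    have hc := M.contr_r f S
    rw [this, sub_zero, Finset.card_insert_of_notMem hfS]
    rwa [show S.card + 1 - M.r (insert f S) = S.card - (M.contr f).r S by omega]
  · intro M S e heS h2 he hr ih1 ih2
    have hc := M.contr_r e S
    have hle := M.r_le_card S
    rw [fp_nonloop M heS he, Finset.card_insert_of_notMem heS]
    rw [show S.card - (M.contr e).r S + 1 = (S.card - M.r S + 1) + 1 by omega, pow_succ] at ih2
    rw [show S.card + 1 - M.r (insert e S) + 1 = (S.card - M.r S + 1) + 1 by omega, pow_succ]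
    simp only [derivative_sub, eval_sub]
    linarith

/-- Multivariate Tutte polynomial. -/
noncomputable def Z (q : ℝ) (M : RankFn α) (S : Finset α) (v : α → ℝ) : ℝ :=
  ∑ A ∈ S.powerset, (q⁻¹) ^ (M.r A) * ∏ e ∈ A, v e

lemma fp_eval_eq_Z (q : ℝ) (hq : q ≠ 0) (M : RankFn α) (S : Finset α) :
    (M.fp S).eval q = (-1) ^ S.card * Z q M S (fun _ => -q) := by
  unfold fp Z
  rw [eval_finsetSum, Finset.mul_sum]
  apply Finset.sum_congr rfl
  intro A hA
  have h1 := Finset.card_le_card (Finset.mem_powerset.mp hA)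
  have h2 := M.r_le_card A
  obtain ⟨k, hk⟩ := Nat.exists_eq_add_of_le h1
  obtain ⟨l, hl⟩ := Nat.exists_eq_add_of_le h2
  simp only [eval_mul, eval_pow, eval_neg, eval_one, eval_X, Finset.prod_const]
  rw [hk, Nat.add_sub_cancel_left]
  rw [hl, Nat.add_sub_cancel_left, neg_pow q, pow_add q, pow_add (-1 : ℝ) _ k]
  have h3 : (q⁻¹) ^ (M.r A) * q ^ (M.r A) = 1 := by
    rw [← mul_pow, inv_mul_cancel₀ hq, one_pow]
  have h4 : ((-1 : ℝ)) ^ (M.r A + l) * (-1) ^ (M.r A + l) = 1 := by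
    rw [← mul_pow]; simp
  calc (-1 : ℝ) ^ k * q ^ l = ((-1 : ℝ) ^ (M.r A + l) * (-1) ^ (M.r A + l)) * (-1 : ℝ) ^ k *
      ((q⁻¹) ^ (M.r A) * q ^ (M.r A)) * q ^ l := by rw [h3, h4]; ring
    _ = _ := by ring

lemma Z_insert (q : ℝ) (M : RankFn α) {S : Finset α} {e : α} (he : e ∉ S) (v : α → ℝ) :
    Z q M (insert e S) v =
      ∑ A ∈ S.powerset, ((q⁻¹) ^ (M.r A) + (q⁻¹) ^ (M.r (insert e A)) * v e) * ∏ e ∈ A, v e := by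
  unfold Z
  rw [Finset.sum_powerset_insert he, ← Finset.sum_add_distrib]
  apply Finset.sum_congr rfl
  intro A hA
  rw [Finset.prod_insert (fun h => he (Finset.mem_powerset.mp hA h))]
  ring

lemma Z_nonloop (q : ℝ) (M : RankFn α) {S : Finset α} {e : α} (he : e ∉ S)
    (h1 : M.r {e} = 1) (v : α → ℝ) :
    Z q M (insert e S) v = Z q M S v + (q⁻¹ * v e) * Z q (M.contr e) S v := by
  rw [Z_insert q M he]
  unfold Z
  rw [Finset.mul_sum, ← Finset.sum_add_distrib]
  apply Finset.sum_congr rfl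
  intro A hA
  rw [← M.contr_r e A, h1, pow_succ]
  ring

lemma Z_insert_two (q : ℝ) (M : RankFn α) {S : Finset α} {e f : α} (he : e ∉ S)
    (hf : f ∉ insert e S) (v : α → ℝ) :
    Z q M (insert f (insert e S)) v =
      ∑ A ∈ S.powerset, ((q⁻¹) ^ (M.r A) + (q⁻¹) ^ (M.r (insert e A)) * v e +
        (q⁻¹) ^ (M.r (insert f A)) * v f + (q⁻¹) ^ (M.r (insert f (insert e A))) * v e * v f)
          * ∏ e ∈ A, v e := by
  rw [Z_insert q M hf, Finset.sum_powerset_insert he, ← Finset.sum_add_distrib]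
  apply Finset.sum_congr rfl
  intro A hA
  rw [Finset.prod_insert (fun h => he (Finset.mem_powerset.mp hA h))]
  ring

lemma Z_insert_update (q : ℝ) (M : RankFn α) {S : Finset α} {e : α} (he : e ∉ S)
    (v : α → ℝ) (w : ℝ) :
    Z q M (insert e S) (Function.update v e w) =
      ∑ A ∈ S.powerset, ((q⁻¹) ^ (M.r A) + (q⁻¹) ^ (M.r (insert e A)) * w) * ∏ e ∈ A, v e := by
  rw [Z_insert q M he]
  apply Finset.sum_congr rfl
  intro A hA
  rw [Function.update_self]
  congr 1
  apply Finset.prod_congr rfl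
  intro x hx
  rw [Function.update_of_ne]
  rintro rfl; exact he (Finset.mem_powerset.mp hA hx)

lemma prod_bounds {a x y : ℝ} (ha1 : -1/3 ≤ a) (ha0 : a < 0) (hx : a ≤ x) (hx' : x ≤ a ^ 2)
    (hy : a ≤ y) (hy' : y ≤ a ^ 2) : a ^ 3 ≤ x * y ∧ x * y ≤ a ^ 2 := by
  have haa : a ^ 2 ≤ -a := by nlinarith
  constructor
  · rcases le_total (x + y) (a + a ^ 2) with h | h
    · nlinarith [mul_nonneg (sub_nonneg.mpr hx) (sub_nonneg.mpr hy)]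
    · nlinarith [mul_nonneg (sub_nonneg.mpr hx') (sub_nonneg.mpr hy'),
        mul_nonneg (sq_nonneg a) (sub_nonneg.mpr h)]
  · have h1 : |x| ≤ -a := abs_le.mpr ⟨by linarith, by linarith⟩
    have h2 : |y| ≤ -a := abs_le.mpr ⟨by linarith, by linarith⟩
    calc x * y ≤ |x * y| := le_abs_self _
      _ = |x| * |y| := abs_mul _ _
      _ ≤ (-a) * (-a) := mul_le_mul h1 h2 (abs_nonneg _) (by linarith)
      _ = a ^ 2 := by ring

lemma series_bounds {a q x y : ℝ} (ha1 : -1/3 ≤ a) (ha0 : a < 0) (hq : q = (a - 1) ^ 2 * (a + 1))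
    (hx : a - 1 ≤ x) (hx' : x ≤ a ^ 2 - 1) (hy : a - 1 ≤ y) (hy' : y ≤ a ^ 2 - 1) :
    x * y ≤ (a - 1) * (q + x + y) ∧ (a ^ 2 - 1) * (q + x + y) ≤ x * y := by
  constructor
  · have h1 : (x - (a - 1)) * (y - (a - 1)) ≤ (a ^ 2 - a) * (a ^ 2 - a) :=
      mul_le_mul (by linarith) (by linarith) (by linarith) (by nlinarith)
    have h2 : (a - 1) ^ 2 + (a - 1) * q = (a ^ 2 - a) * (a ^ 2 - a) := by rw [hq]; ring
    nlinarith
  · have h1 : 0 ≤ (a ^ 2 - 1 - x) * (a ^ 2 - 1 - y) :=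
      mul_nonneg (by linarith) (by linarith)
    have h2 : (a ^ 2 - 1) ^ 2 + (a ^ 2 - 1) * q = a * (1 - a ^ 2) ^ 2 := by rw [hq]; ring
    have h3 : a * (1 - a ^ 2) ^ 2 ≤ 0 := mul_nonpos_of_nonpos_of_nonneg ha0.le (sq_nonneg _)
    nlinarith

theorem Z_pos {a q : ℝ} (ha1 : -1/3 ≤ a) (ha0 : a < 0) (hq : q = (a - 1) ^ 2 * (a + 1)) :
    ∀ (M : RankFn α) (S : Finset α), 2 ≤ S.card → M.Conn S →
    ∀ v : α → ℝ, (∀ e, a - 1 ≤ v e ∧ v e ≤ a ^ 2 - 1) →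
    0 < (-1 : ℝ) ^ (M.r S + 1) * Z q M S v := by
  have hqpos : 0 < q := by rw [hq]; have : 0 < a + 1 := by linarith
                           have : a - 1 ≠ 0 := by linarith
                           positivity
  have ha2 : a ^ 2 < 1 := by nlinarith
  have hqi : 0 < q⁻¹ := inv_pos.mpr hqpos
  have hqq : q * q⁻¹ = 1 := mul_inv_cancel₀ hqpos.ne'
  apply conn_induction (P := fun M S => ∀ v : α → ℝ, (∀ e, a - 1 ≤ v e ∧ v e ≤ a ^ 2 - 1) →
    0 < (-1 : ℝ) ^ (M.r S + 1) * Z q M S v)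
  · intro M e f hef he hf hr v hv
    have h1 : f ∉ (insert e ∅ : Finset α) := by simpa using hef.symm
    have h2 := Z_insert_two q M (S := ∅) (e := e) (f := f) (by simp) h1 v
    have h3 : insert f (insert e (∅ : Finset α)) = {e, f} := by
      rw [Finset.pair_comm]; rfl
    rw [h3] at h2
    rw [h2, hr]
    simp only [Finset.powerset_empty, Finset.sum_singleton, insert_empty_eq, he, hf,
      M.r_empty, Finset.prod_empty]
    rw [Finset.pair_comm f e, hr]
    obtain ⟨e1, e2⟩ := hv e
    obtain ⟨f1, f2⟩ := hv f
    have key : 0 < q + v e + v f + v e * v f := by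
      have t1 : a ^ 3 ≤ (1 + v e) * (1 + v f) :=
        (prod_bounds ha1 ha0 (by linarith) (by linarith) (by linarith) (by linarith)).1
      have : 0 < q - 1 + a ^ 3 := by
        rw [hq]
        nlinarith [mul_pos (neg_pos.mpr ha0) (mul_pos (by linarith : 0 < 1 - a)
          (by linarith : 0 < 1 + 2 * a))]
      linarith
    have : 0 < q⁻¹ * (q + v e + v f + v e * v f) := by positivity
    have e3 : q⁻¹ * (q + v e + v f + v e * v f) = 
      1 + q⁻¹ * v e + q⁻¹ * v f + q⁻¹ * v e * v f := by
      linear_combination hqq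
    rw [e3] at this
    simpa using this
  · intro M S e f heS hfS h2 he hf hr ih v hv
    have hrf : M.r (insert f S) = M.r S :=
      M.r_cl f {e} S (by simpa using heS) (by rw [Finset.pair_comm, hr, he])
    obtain ⟨T, heT, rfl⟩ : ∃ T, e ∉ T ∧ insert e T = S :=
      ⟨S.erase e, Finset.notMem_erase _ _, Finset.insert_erase heS⟩
    obtain ⟨e1, e2⟩ := hv e
    obtain ⟨f1, f2⟩ := hv f
    have := ih (Function.update v e ((1 + v e) * (1 + v f) - 1)) (by
      intro x
      by_cases hx : x = e
      · subst hx
        rw [Function.update_self]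
        have t := prod_bounds (x := 1 + v x) (y := 1 + v f) ha1 ha0 (by linarith) (by linarith)
          (by linarith) (by linarith)
        have t3 : a ≤ a ^ 3 := by nlinarith
        constructor <;> linarith [t.1, t.2]
      · rw [Function.update_of_ne hx]; exact hv x)
    rw [hrf]
    convert this using 2
    rw [Z_insert_two q M heT hfS, Z_insert_update q M heT]
    apply Finset.sum_congr rfl
    intro A hA
    have r1 : M.r (insert f (insert e A)) = M.r (insert e A) :=
      M.r_cl f {e} _ (by simp) (by rw [Finset.pair_comm, hr, he])
    have r2 : M.r (insert e (insert f A)) = M.r (insert f A) :=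
      M.r_cl e {f} _ (by simp) (by rw [hr, hf])
    rw [Finset.insert_comm] at r2
    have r3 : M.r (insert f A) = M.r (insert e A) := by omega
    rw [r1, r3]
    ring
  · intro M S e f heS hfS h2 hf h3 h4 h5 ih v hv
    obtain ⟨T, heT, rfl⟩ : ∃ T, e ∉ T ∧ insert e T = S :=
      ⟨S.erase e, Finset.notMem_erase _ _, Finset.insert_erase heS⟩
    rw [Finset.erase_insert heT] at h3 h4 h5
    obtain ⟨e1, e2⟩ := hv e
    obtain ⟨f1, f2⟩ := hv f
    have hD : q + v e + v f < 0 := by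
      have : 0 < (1 - a) * (1 + a) * (1 + a) := by
        have : 0 < 1 - a := by linarith
        have : 0 < 1 + a := by linarith
        positivity
      rw [hq]; nlinarith
    have := ih (Function.update v e (v e * v f / (q + v e + v f))) (by
      intro x
      by_cases hx : x = e
      · subst hx
        rw [Function.update_self]
        rw [le_div_iff_of_neg hD, div_le_iff_of_neg hD]
        exact series_bounds ha1 ha0 hq e1 e2 f1 f2
      · rw [Function.update_of_ne hx]; exact hv x)
    have hc := M.contr_r f (insert e T)
    have hZ : Z q M (insert f (insert e T)) v = (q⁻¹ * (q + v e + v f)) *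
        Z q (M.contr f) (insert e T) (Function.update v e (v e * v f / (q + v e + v f))) := by
      rw [Z_insert_two q M heT hfS, Z_insert_update q _ heT, Finset.mul_sum]
      apply Finset.sum_congr rfl
      intro A hA
      have hA' := Finset.mem_powerset.mp hA
      have up : ∀ g, M.r (insert g T) = M.r T + 1 → M.r (insert g A) = M.r A + 1 := by
        intro g hg
        have t1 := M.r_ge g A
        have t2 := M.r_le g A
        by_contra hne
        have := M.r_cl g A T hA' (by omega)
        omega
      have re := up e h3
      have rf := up f h4
      have c1 := M.contr_r f A
      have c2 := M.contr_r f (insert e A)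
      rw [hf] at c1 c2
      have c1' : (M.contr f).r A = M.r A := by omega
      rw [c1', re, rf, ← c2]
      have hw : (v e * v f / (q + v e + v f)) * (q + v e + v f) = v e * v f :=
        div_mul_cancel₀ _ hD.ne
      rw [← mul_assoc]
      congr 1
      rw [pow_succ, pow_succ]
      linear_combination (q⁻¹ ^ M.r A) * (-hqq) - q⁻¹ * (q⁻¹) ^ ((M.contr f).r (insert e A)) * hw
    rw [hZ, ← hc, hf, pow_succ]
    have : 0 < -(q⁻¹ * (q + v e + v f)) := by
      have := mul_pos hqi (neg_pos.mpr hD); linarith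
    nlinarith
  · intro M S e heS h2 he hr ih1 ih2 v hv
    have hc := M.contr_r e S
    rw [Z_nonloop q M heS he, hr]
    have i1 := ih1 v hv
    have i2 := ih2 v hv
    rw [show M.r S + 1 = ((M.contr e).r S + 1) + 1 by omega, pow_succ] at i1 ⊢
    have : 0 < - (q⁻¹ * v e) := by
      have := mul_pos hqi (by linarith [(hv e).2] : 0 < - v e); linarith
    nlinarith

/-- Choice of the parameter `a`. -/
lemma exists_param {q : ℝ} (h1 : 1 < q) (h2 : q ≤ 32 / 27) :
    ∃ a : ℝ, -1/3 ≤ a ∧ a < 0 ∧ q = (a - 1) ^ 2 * (a + 1) := by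
  have hc : ContinuousOn (fun a : ℝ => (a - 1) ^ 2 * (a + 1)) (Set.Icc (-1/3) 0) := by fun_prop
  have := intermediate_value_Icc' (by norm_num) hc
  obtain ⟨a, ha, haq⟩ := this (show q ∈ _ by constructor <;> norm_num <;> linarith)
  refine ⟨a, ha.1, lt_of_le_of_ne ha.2 ?_, haq.symm⟩
  rintro rfl
  norm_num at haq
  linarith

theorem fp_pos_gt_one {q : ℝ} (h1 : 1 < q) (h2 : q ≤ 32 / 27) (M : RankFn α) (S : Finset α)
    (hS : 2 ≤ S.card) (hconn : M.Conn S) :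
    0 < (-1 : ℝ) ^ (S.card - M.r S + 1) * (M.fp S).eval q := by
  obtain ⟨a, ha1, ha0, hq⟩ := exists_param h1 h2
  have := Z_pos ha1 ha0 hq M S hS hconn (fun _ => -q) (by
    intro _
    rw [hq]
    constructor <;> nlinarith [mul_pos (neg_pos.mpr ha0) (neg_pos.mpr ha0)])
  rw [fp_eval_eq_Z q (by linarith)]
  obtain ⟨l, hl⟩ := Nat.exists_eq_add_of_le (M.r_le_card S)
  rw [← mul_assoc, hl, Nat.add_sub_cancel_left, ← pow_add]
  convert this using 2
  rw [show l + 1 + (M.r S + l) = (M.r S + 1) + 2 * l by ring, pow_add, pow_mul]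
  simp

end RankFn

end

section
open Polynomial

namespace RankFn

variable {α : Type} [DecidableEq α]

lemma sep_restrict (M : RankFn α) {A B X Y : Finset α} (h : M.r A + M.r B ≤ M.r (A ∪ B))
    (hX : X ⊆ A) (hY : Y ⊆ B) : M.r (X ∪ Y) = M.r X + M.r Y := by
  have h1 := M.r_diff hX B
  have h2 := M.r_diff hY X
  rw [Finset.union_comm B X, Finset.union_comm Y X] at h2
  have h3 := M.r_union_le X Y
  omega

lemma sum_powerset_union {β : Type*} [AddCommMonoid β] (A B : Finset α) (hd : Disjoint A B) :
    ∀ g : Finset α → β, ∑ X ∈ (A ∪ B).powerset, g X =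
      ∑ X ∈ A.powerset, ∑ Y ∈ B.powerset, g (X ∪ Y) := by
  induction B using Finset.induction_on with
  | empty => intro g; simp
  | insert b B hb ih =>
    intro g
    rw [Finset.disjoint_insert_right] at hd
    have hb' : b ∉ A ∪ B := by simp [hb, hd.1]
    rw [Finset.union_insert, Finset.sum_powerset_insert hb', ih hd.2, ih hd.2,
      ← Finset.sum_add_distrib]
    apply Finset.sum_congr rfl
    intro X _
    rw [Finset.sum_powerset_insert hb]
    simp [Finset.union_insert]

lemma fp_union (M : RankFn α) {A B : Finset α} (hd : Disjoint A B)
    (h : M.r A + M.r B ≤ M.r (A ∪ B)) : M.fp (A ∪ B) = M.fp A * M.fp B := by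
  unfold fp
  rw [sum_powerset_union A B hd, Finset.sum_mul_sum]
  apply Finset.sum_congr rfl
  intro X hX
  apply Finset.sum_congr rfl
  intro Y hY
  rw [Finset.mem_powerset] at hX hY
  have h1 := M.sep_restrict h hX hY
  have h2 := Finset.card_le_card hX
  have h3 := Finset.card_le_card hY
  have h4 := M.r_le_card X
  have h5 := M.r_le_card Y
  rw [Finset.card_union_of_disjoint hd, Finset.card_union_of_disjoint (hd.mono hX hY), h1,
    show A.card + B.card - (X.card + Y.card) = (A.card - X.card) + (B.card - Y.card) by omega,
    show X.card + Y.card - (M.r X + M.r Y) = (X.card - M.r X) + (Y.card - M.r Y) by omega,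
    pow_add, pow_add]
  ring

/-- Decomposition into connected components. -/
theorem exists_components (M : RankFn α) : ∀ n : ℕ, ∀ S : Finset α, S.card = n →
    ∃ P : Finset (Finset α), (∀ C ∈ P, C.Nonempty ∧ C ⊆ S ∧ M.Conn C ∧
        M.r C + M.r (S \ C) ≤ M.r S) ∧
      (∀ x ∈ S, ∃ C ∈ P, x ∈ C) ∧
      M.fp S = ∏ C ∈ P, M.fp C ∧ S.card - M.r S = ∑ C ∈ P, (C.card - M.r C) := by
  intro n
  induction n using Nat.strong_induction_on with
  | _ n ih =>
  intro S hn
  by_cases hne : S = ∅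
  · subst hne
    exact ⟨∅, by simp, by simp, by simp [fp, M.r_empty], by simp⟩
  have hne := Finset.nonempty_iff_ne_empty.mpr hne
  by_cases hS : M.Conn S
  · refine ⟨{S}, ?_, ?_, by simp, by simp⟩
    · intro C hC
      rw [Finset.mem_singleton] at hC
      subst hC
      exact ⟨hne, subset_rfl, hS, by simp [M.r_empty]⟩
    · intro x hx; exact ⟨S, by simp, hx⟩
  · obtain ⟨A, hAS, hA, hAne, hr⟩ := M.not_conn hS
    obtain ⟨B, hd, rfl⟩ : ∃ B, Disjoint A B ∧ A ∪ B = S :=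
      ⟨S \ A, Finset.disjoint_sdiff, Finset.union_sdiff_of_subset hAS⟩
    rw [Finset.union_sdiff_cancel_left hd] at hr
    have hB : B.Nonempty := by
      rw [Finset.nonempty_iff_ne_empty]; rintro rfl; simp at hAne
    have hc := Finset.card_union_of_disjoint hd
    have hA1 := Finset.card_pos.mpr hA
    have hB1 := Finset.card_pos.mpr hB
    obtain ⟨PA, a1, a2, a3, a4⟩ := ih A.card (by omega) A rfl
    obtain ⟨PB, b1, b2, b3, b4⟩ := ih B.card (by omega) B rfl
    have hPd : Disjoint PA PB := by
      rw [Finset.disjoint_left]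
      intro C hCA hCB
      obtain ⟨x, hx⟩ := (a1 C hCA).1
      exact Finset.disjoint_left.mp hd ((a1 C hCA).2.1 hx) ((b1 C hCB).2.1 hx)
    have hru := M.r_union_le A B
    refine ⟨PA ∪ PB, ?_, ?_, ?_, ?_⟩
    · intro C hC
      rcases Finset.mem_union.mp hC with hC | hC
      · obtain ⟨c1, c2, c3, c4⟩ := a1 C hC
        refine ⟨c1, c2.trans Finset.subset_union_left, c3, ?_⟩
        have : M.r ((A ∪ B) \ C) ≤ M.r (A \ C) + M.r B := by
          refine le_trans (M.r_mono ?_) (M.r_union_le _ _)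
          intro x; simp; tauto
        omega
      · obtain ⟨c1, c2, c3, c4⟩ := b1 C hC
        refine ⟨c1, c2.trans Finset.subset_union_right, c3, ?_⟩
        have : M.r ((A ∪ B) \ C) ≤ M.r A + M.r (B \ C) := by
          refine le_trans (M.r_mono ?_) (M.r_union_le _ _)
          intro x; simp; tauto
        omega
    · intro x hx
      rcases Finset.mem_union.mp hx with hx | hx
      · obtain ⟨C, hC, h⟩ := a2 x hx
        exact ⟨C, Finset.mem_union_left _ hC, h⟩
      · obtain ⟨C, hC, h⟩ := b2 x hx
        exact ⟨C, Finset.mem_union_right _ hC, h⟩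
    · rw [M.fp_union hd hr, Finset.prod_union hPd, a3, b3]
    · rw [Finset.sum_union hPd, ← a4, ← b4, hc]
      have := M.r_le_card A
      have := M.r_le_card B
      omega

/-- A connected set meeting a separator lies inside it. -/
lemma conn_subset (M : RankFn α) {S C D : Finset α} (hCS : C ⊆ S) (hDS : D ⊆ S)
    (hsep : M.r C + M.r (S \ C) ≤ M.r S) (hD : M.Conn D) {x : α} (hxC : x ∈ C) (hxD : x ∈ D) :
    D ⊆ C := by
  by_contra hnot
  have h1 : D ∩ C ≠ D := fun h => hnot (Finset.inter_eq_left.mp h)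
  have h2 := hD (D ∩ C) Finset.inter_subset_left ⟨x, by simp [hxC, hxD]⟩ h1
  have h3 := M.sep_restrict (A := C) (B := S \ C) (X := D ∩ C) (Y := D \ C)
    (by rwa [Finset.union_sdiff_of_subset hCS]) Finset.inter_subset_right
    (Finset.sdiff_subset_sdiff hDS subset_rfl)
  rw [Finset.sdiff_inter_self_left] at h2
  rw [Finset.union_comm, Finset.sdiff_union_inter] at h3
  omega

lemma rootMult_of_conn (M : RankFn α) {S : Finset α} (h2 : 2 ≤ S.card) (hS : M.Conn S) :
    (M.fp S).rootMultiplicity 1 = 1 := by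
  have h1 := M.fp_deriv_one S h2 hS
  have hd : (derivative (M.fp S)).eval 1 ≠ 0 := by
    intro h; rw [h] at h1; simp at h1
  have h0 : (M.fp S).IsRoot 1 := M.fp_eval_one (Finset.card_pos.mp (by omega))
  have hne : M.fp S ≠ 0 := by
    intro h; rw [h] at hd; simp at hd
  have hpos := (rootMultiplicity_pos hne).mpr h0
  have hlt : ¬ 1 < (M.fp S).rootMultiplicity 1 := by
    intro h
    rw [one_lt_rootMultiplicity_iff_isRoot hne] at h
    exact hd h.2
  omega

end RankFn

end

section
open Polynomial

namespace Multigraph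

variable {V E : Type}

lemma Reach.mono (G : Multigraph V E) {A B : Set E} (h : A ⊆ B) {u w : V}
    (hr : G.Reach A u w) : G.Reach B u w := by
  induction hr with
  | rel x y hxy =>
    obtain ⟨e, he, hor⟩ := hxy
    exact Relation.EqvGen.rel _ _ ⟨e, h he, hor⟩
  | refl x => exact Relation.EqvGen.refl _
  | symm x y _ ih => exact ih.symm
  | trans x y z _ _ ih1 ih2 => exact ih1.trans _ _ _ ih2

lemma Reach.edge (G : Multigraph V E) {A : Set E} {e : E} (h : e ∈ A) :
    G.Reach A (G.fst e) (G.snd e) :=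
  Relation.EqvGen.rel _ _ ⟨e, h, Or.inl ⟨rfl, rfl⟩⟩

/-- Transport of reachability along a map. -/
lemma Reach.map (G : Multigraph V E) {V' E' : Type} (G' : Multigraph V' E') {A : Set E}
    {B : Set E'} (f : V → V') (hf : ∀ e ∈ A, G'.Reach B (f (G.fst e)) (f (G.snd e))) {u w : V}
    (hr : G.Reach A u w) : G'.Reach B (f u) (f w) := by
  induction hr with
  | rel x y h =>
    obtain ⟨e, he, ⟨rfl, rfl⟩ | ⟨rfl, rfl⟩⟩ := h
    · exact hf e he
    · exact (hf e he).symm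
  | refl x => exact Relation.EqvGen.refl _
  | symm x y _ ih => exact ih.symm
  | trans x y z _ _ ih1 ih2 => exact ih1.trans _ _ _ ih2

/-- A vertex predicate which is invariant along edges is invariant along reachability. -/
lemma Reach.invariant (G : Multigraph V E) {A : Set E} (p : V → Prop)
    (hp : ∀ e ∈ A, (p (G.fst e) ↔ p (G.snd e))) {u w : V} (hr : G.Reach A u w) :
    p u ↔ p w := by
  induction hr with
  | rel x y h =>
    obtain ⟨e, he, ⟨rfl, rfl⟩ | ⟨rfl, rfl⟩⟩ := h
    · exact hp e he
    · exact (hp e he).symm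
  | refl x => exact Iff.rfl
  | symm x y _ ih => exact ih.symm
  | trans x y z _ _ ih1 ih2 => exact ih1.trans ih2

lemma reach_insert (G : Multigraph V E) (A : Set E) (e : E) {u w : V}
    (h : G.Reach (insert e A) u w) :
    G.Reach A u w ∨ (G.Reach A u (G.fst e) ∧ G.Reach A (G.snd e) w) ∨
      (G.Reach A u (G.snd e) ∧ G.Reach A (G.fst e) w) := by
  have T : ∀ {a b c}, G.Reach A a b → G.Reach A b c → G.Reach A a c :=
    fun h1 h2 => Relation.EqvGen.trans _ _ _ h1 h2
  have Sy : ∀ {a b}, G.Reach A a b → G.Reach A b a := fun h1 => Relation.EqvGen.symm _ _ h1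
  have R : ∀ a, G.Reach A a a := fun a => Relation.EqvGen.refl _
  induction h with
  | rel x y h =>
    obtain ⟨f, hf, h⟩ := h
    rcases hf with rfl | hf
    · rcases h with ⟨rfl, rfl⟩ | ⟨rfl, rfl⟩
      · exact Or.inr (Or.inl ⟨R _, R _⟩)
      · exact Or.inr (Or.inr ⟨R _, R _⟩)
    · exact Or.inl (Relation.EqvGen.rel _ _ ⟨f, hf, h⟩)
  | refl x => exact Or.inl (R _)
  | symm x y _ ih =>
    rcases ih with h | ⟨h1, h2⟩ | ⟨h1, h2⟩
    · exact Or.inl (Sy h)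
    · exact Or.inr (Or.inr ⟨Sy h2, Sy h1⟩)
    · exact Or.inr (Or.inl ⟨Sy h2, Sy h1⟩)
  | trans x y z _ _ ih1 ih2 =>
    rcases ih1 with h | ⟨h1, h2⟩ | ⟨h1, h2⟩ <;> rcases ih2 with k | ⟨k1, k2⟩ | ⟨k1, k2⟩
    · exact Or.inl (T h k)
    · exact Or.inr (Or.inl ⟨T h k1, k2⟩)
    · exact Or.inr (Or.inr ⟨T h k1, k2⟩)
    · exact Or.inr (Or.inl ⟨h1, T h2 k⟩)
    · exact Or.inr (Or.inl ⟨h1, k2⟩)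
    · exact Or.inl (T h1 k2)
    · exact Or.inr (Or.inr ⟨h1, T h2 k⟩)
    · exact Or.inl (T h1 k2)
    · exact Or.inr (Or.inr ⟨h1, k2⟩)

lemma ncomp_insert_of_reach (G : Multigraph V E) (A : Set E) (e : E)
    (h : G.Reach A (G.fst e) (G.snd e)) : G.ncomp (insert e A) = G.ncomp A := by
  have : G.reachSetoid (insert e A) = G.reachSetoid A := by
    ext u w
    constructor
    · intro hr
      refine Reach.map G G id ?_ hr
      rintro f (rfl | hf)
      · exact h
      · exact Reach.edge G hf
    · intro hr
      exact Reach.mono G (Set.subset_insert _ _) hr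
  unfold ncomp
  rw [this]

lemma ncomp_insert_of_not_reach [Finite V] (G : Multigraph V E) (A : Set E) (e : E)
    (h : ¬ G.Reach A (G.fst e) (G.snd e)) : G.ncomp (insert e A) + 1 = G.ncomp A := by
  classical
  have := Fintype.ofFinite V
  let Q := Quotient (G.reachSetoid A)
  let Q' := Quotient (G.reachSetoid (insert e A))
  let x : Q := Quotient.mk _ (G.fst e)
  let F : Q → Q' := Quotient.map' id (fun u w hr => Reach.mono G (Set.subset_insert _ _) hr)
  let F' : {c : Q // c ≠ x} → Q' := fun c => F c.1
  have hbij : Function.Bijective F' := by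
    constructor
    · rintro ⟨c, hc⟩ ⟨d, hd⟩ hcd
      induction c using Quotient.inductionOn with | _ u
      induction d using Quotient.inductionOn with | _ w
      have hr : G.Reach (insert e A) u w := Quotient.exact hcd
      have hc' : ¬ G.Reach A u (G.fst e) := fun h => hc (Quotient.sound h)
      have hd' : ¬ G.Reach A w (G.fst e) := fun h => hd (Quotient.sound h)
      rcases G.reach_insert A e hr with h | ⟨h1, h2⟩ | ⟨h1, h2⟩
      · exact Subtype.ext (Quotient.sound h)
      · exact absurd h1 hc'
      · exact absurd h2.symm hd'
    · intro c
      induction c using Quotient.inductionOn with | _ z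
      by_cases hz : G.Reach A z (G.fst e)
      · refine ⟨⟨Quotient.mk _ (G.snd e), fun h' => h (Quotient.exact h').symm⟩, ?_⟩
        refine Quotient.sound ?_
        have h1 : G.Reach (insert e A) (G.snd e) (G.fst e) :=
          (Reach.edge G (Set.mem_insert _ _)).symm
        have h2 : G.Reach (insert e A) z (G.fst e) := Reach.mono G (Set.subset_insert _ _) hz
        exact h1.trans _ _ _ h2.symm
      · exact ⟨⟨Quotient.mk _ z, fun h' => hz (Quotient.exact h')⟩, rfl⟩
  have h1 := Nat.card_congr (Equiv.ofBijective F' hbij)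
  have h2 : Nat.card {c : Q // c ≠ x} + 1 = Nat.card Q := by
    have := Fintype.ofFinite Q
    rw [Nat.card_eq_fintype_card, Nat.card_eq_fintype_card, Fintype.card_subtype_compl]
    have : 0 < Fintype.card Q := Fintype.card_pos_iff.mpr ⟨x⟩
    simp
    omega
  unfold ncomp
  rw [← h1, h2]

lemma ncomp_le [Fintype V] (G : Multigraph V E) (A : Set E) : G.ncomp A ≤ Fintype.card V := by
  rw [← Nat.card_eq_fintype_card]
  exact Nat.card_le_card_of_surjective _ Quotient.mk_surjective

lemma ncomp_empty [Fintype V] (G : Multigraph V E) : G.ncomp ∅ = Fintype.card V := by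
  rw [← Nat.card_eq_fintype_card]
  refine (Nat.card_eq_of_bijective (Quotient.mk (G.reachSetoid ∅)) ⟨?_, Quotient.mk_surjective⟩).symm
  intro u w h
  have hr : G.Reach ∅ u w := Quotient.exact h
  exact ((Reach.invariant G (fun z => z = u) (by simp) hr).mp rfl).symm

/-- The rank function of the cycle matroid. -/
noncomputable def grank [Fintype V] [DecidableEq E] (G : Multigraph V E) : RankFn E where
  r A := Fintype.card V - G.ncomp A
  r_empty := by
    rw [Finset.coe_empty, ncomp_empty]; simp
  r_le e A := by
    rw [Finset.coe_insert]
    by_cases h : G.Reach A (G.fst e) (G.snd e)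
    · rw [G.ncomp_insert_of_reach _ e h]
    · have := G.ncomp_insert_of_not_reach _ e h
      omega
  r_ge e A := by
    rw [Finset.coe_insert]
    by_cases h : G.Reach A (G.fst e) (G.snd e)
    · rw [G.ncomp_insert_of_reach _ e h]; omega
    · have := G.ncomp_insert_of_not_reach _ e h
      omega
  r_cl e A B hAB h := by
    rw [Finset.coe_insert] at *
    have hA := G.ncomp_le (A : Set E)
    by_cases hr : G.Reach A (G.fst e) (G.snd e)
    · rw [G.ncomp_insert_of_reach _ e (Reach.mono G (by simpa using hAB) hr)]
    · have := G.ncomp_insert_of_not_reach _ e hr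
      omega

variable [Fintype V] [DecidableEq E]

lemma grank_r (G : Multigraph V E) (A : Finset E) :
    G.grank.r A + G.ncomp A = Fintype.card V := by
  have := G.ncomp_le (A : Set E)
  simp only [grank]
  omega

lemma grank_cl (G : Multigraph V E) (A : Finset E) (e : E) :
    G.grank.r (insert e A) = G.grank.r A ↔ G.Reach A (G.fst e) (G.snd e) := by
  have h1 := G.grank_r A
  have h2 := G.grank_r (insert e A)
  rw [Finset.coe_insert] at h2
  constructor
  · intro h
    by_contra hr
    have := G.ncomp_insert_of_not_reach _ e hr
    omega
  · intro hr
    have := G.ncomp_insert_of_reach _ e hr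
    omega

lemma grank_single (G : Multigraph V E) (e : E) :
    G.grank.r {e} = 0 ↔ G.fst e = G.snd e := by
  have := G.grank_cl ∅ e
  rw [G.grank.r_empty, insert_empty_eq, Finset.coe_empty] at this
  rw [this]
  constructor
  · intro hr
    exact ((Reach.invariant G (fun z => z = G.fst e) (by simp) hr).mp rfl).symm
  · intro h; rw [h]; exact Relation.EqvGen.refl _

/-- Vertices covered by an edge set. -/
def vset (G : Multigraph V E) (C : Finset E) : Set V := {z | ∃ e ∈ C, G.fst e = z ∨ G.snd e = z}

lemma fst_vset (G : Multigraph V E) {C : Finset E} {e : E} (h : e ∈ C) : G.fst e ∈ G.vset C :=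
  ⟨e, h, Or.inl rfl⟩

lemma snd_vset (G : Multigraph V E) {C : Finset E} {e : E} (h : e ∈ C) : G.snd e ∈ G.vset C :=
  ⟨e, h, Or.inr rfl⟩

lemma grank_split (G : Multigraph V E) (A B : Finset E) (x : V)
    (h : ∀ z ∈ G.vset A, z ∈ G.vset B → z = x) :
    G.grank.r A + G.grank.r B ≤ G.grank.r (A ∪ B) := by
  classical
  have key : ∀ B' : Finset E, B' ⊆ B → G.grank.r A + G.grank.r B' ≤ G.grank.r (A ∪ B') := by
    intro B'
    induction B' using Finset.induction_on with
    | empty => intro _; simp [G.grank.r_empty]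
    | insert b B' hb ih =>
      intro hB
      have hbB : b ∈ B := hB (Finset.mem_insert_self _ _)
      have hB' : B' ⊆ B := (Finset.subset_insert _ _).trans hB
      have ih := ih hB'
      rw [Finset.union_insert]
      have h1 := G.grank.r_ge b B'
      have h2 := G.grank.r_le b (A ∪ B')
      by_cases hr : G.grank.r (insert b (A ∪ B')) = G.grank.r (A ∪ B')
      · have hr' := (G.grank_cl _ _).mp hr
        let f : V → V := fun z => if z ∈ G.vset B then z else x
        have hfA : ∀ z ∈ G.vset A, f z = x := by
          intro z hz
          by_cases hzB : z ∈ G.vset B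
          · simp only [f, hzB, if_true]; exact h z hz hzB
          · simp only [f, hzB, if_false]
        have hfB : ∀ z ∈ G.vset B, f z = z := by
          intro z hz
          simp only [f, hz, if_true]
        have := Reach.map G G (B := (B' : Set E)) f (by
          intro e he
          simp only [Finset.coe_union, Set.mem_union, Finset.mem_coe] at he
          rcases he with he | he
          · rw [hfA _ (G.fst_vset he), hfA _ (G.snd_vset he)]
            exact Relation.EqvGen.refl _
          · rw [hfB _ (G.fst_vset (hB' he)), hfB _ (G.snd_vset (hB' he))]
            exact Reach.edge G he) hr'
        rw [hfB _ (G.fst_vset hbB), hfB _ (G.snd_vset hbB)] at this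
        have := (G.grank_cl _ _).mpr this
        omega
      · omega
  exact key B subset_rfl

/-- The subgraph spanned by an edge set. -/
def csub (G : Multigraph V E) (C : Finset E) : G.Subgraph where
  verts := G.vset C
  edges := C
  fst_mem := fun _ h => G.fst_vset h
  snd_mem := fun _ h => G.snd_vset h


lemma csub_nonsep (G : Multigraph V E) (C : Finset E) (hne : C.Nonempty)
    (hC : G.grank.Conn C) (hl : (∃ e, C = {e} ∧ G.fst e = G.snd e) ∨ 2 ≤ C.card) :
    (G.csub C).toMultigraph.NonSeparable := by
  classical
  rcases hl with ⟨e, rfl, he⟩ | h2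
  · left
    constructor
    · have : (G.csub {e}).verts = {G.fst e} := by
        ext z; simp [csub, vset, ← he, eq_comm]
      rw [this]; simp
    · show Nat.card ↑((({e} : Finset E) : Set E)) ≤ 1
      simp
  right
  set H := (G.csub C).toMultigraph with hH
  -- a split along at most one vertex is impossible
  have nosplit : ∀ (A : Finset E) (x : V), A ⊆ C → A.Nonempty → A ≠ C →
      (∀ z ∈ G.vset A, z ∈ G.vset (C \ A) → z = x) → False := by
    intro A x hA hAne hAC h
    have h1 := hC A hA hAne hAC
    have h2 := G.grank_split A (C \ A) x h
    rw [Finset.union_sdiff_of_subset hA] at h2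
    omega
  have hreach : ∀ u w, H.Reach Set.univ u w := by
    intro u w
    by_contra hr
    let A : Finset E := C.filter (fun e => ∃ h : e ∈ C, H.Reach Set.univ u (H.fst ⟨e, h⟩))
    have hA : ∀ e (h : e ∈ C), e ∈ A ↔ H.Reach Set.univ u (H.fst ⟨e, h⟩) := by
      intro e h
      simp [A, h]
    have hvA : ∀ z, (hz : z ∈ G.vset C) → z ∈ G.vset A → H.Reach Set.univ u ⟨z, hz⟩ := by
      rintro z hz ⟨e, he, h⟩
      have heC : e ∈ C := (Finset.mem_filter.mp he).1
      have hre := (hA e heC).mp he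
      rcases h with rfl | rfl
      · exact hre
      · exact hre.trans _ _ _ (Reach.edge H (Set.mem_univ (⟨e, heC⟩ : (G.csub C).edges)))
    have hvB : ∀ z, (hz : z ∈ G.vset C) → z ∈ G.vset (C \ A) → ¬ H.Reach Set.univ u ⟨z, hz⟩ := by
      rintro z hz ⟨e, he, h⟩ hr
      have heC : e ∈ C := (Finset.mem_sdiff.mp he).1
      apply (Finset.mem_sdiff.mp he).2
      rw [hA e heC]
      rcases h with rfl | rfl
      · exact hr
      · exact hr.trans _ _ _ (Reach.edge H (Set.mem_univ (⟨e, heC⟩ : (G.csub C).edges))).symm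
    obtain ⟨u, hu⟩ := u
    obtain ⟨w, hw⟩ := w
    obtain ⟨eu, heu, hu'⟩ := id hu
    obtain ⟨ew, hew, hw'⟩ := id hw
    refine nosplit A u (Finset.filter_subset _ _) ⟨eu, ?_⟩ ?_ ?_
    · by_contra hnot
      exact hvB u hu ⟨eu, Finset.mem_sdiff.mpr ⟨heu, hnot⟩, hu'⟩ (Relation.EqvGen.refl _)
    · intro hAC
      exact hr (hvA w hw ⟨ew, hAC ▸ hew, hw'⟩)
    · intro z hzA hzB
      have hz : z ∈ G.vset C := by
        obtain ⟨e, he, h⟩ := hzA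
        exact ⟨e, (Finset.mem_filter.mp he).1, h⟩
      exact absurd (hvA z hz hzA) (hvB z hz hzB)
  have hconn : H.Connected := by
    obtain ⟨e, he⟩ := hne
    unfold Connected numComponents ncomp
    rw [Nat.card_eq_one_iff_unique]
    refine ⟨⟨?_⟩, ⟨Quotient.mk _ ⟨G.fst e, G.fst_vset he⟩⟩⟩
    intro a b
    induction a using Quotient.inductionOn with | _ u
    induction b using Quotient.inductionOn with | _ w
    exact Quotient.sound (hreach u w)
  refine ⟨hconn, ?_, ?_⟩
  · rintro ⟨e, he⟩ heq
    have heq' : G.fst e = G.snd e := congrArg Subtype.val heq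
    have h0 := (G.grank_single e).mpr heq'
    have := (hC.single _ h2 he).1
    omega
  · intro x hx
    unfold IsCutVertex at hx
    rw [show H.numComponents = 1 from hconn] at hx
    set K := H.deleteVerts {x} with hK
    have hfin : Finite (Quotient (K.reachSetoid Set.univ)) := by
      apply Nat.finite_of_card_ne_zero
      unfold numComponents ncomp at hx
      omega
    have hnt : Nontrivial (Quotient (K.reachSetoid Set.univ)) :=
      Finite.one_lt_card_iff_nontrivial.mp hx
    obtain ⟨a, b, hab⟩ := hnt
    induction a using Quotient.inductionOn with | _ u
    induction b using Quotient.inductionOn with | _ w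
    have hr : ¬ K.Reach Set.univ u w := fun h => hab (Quotient.sound h)
    obtain ⟨x, hxC⟩ := x
    -- vertices in the component of `u`
    let p : V → Prop := fun z => ∃ (h : z ∈ G.vset C) (h' : (⟨z, h⟩ : G.vset C) ∉
      ({⟨x, hxC⟩} : Set (G.vset C))), K.Reach Set.univ u ⟨⟨z, h⟩, h'⟩
    have hpx : ∀ z, p z → z ≠ x := by
      rintro z ⟨h, h', _⟩ rfl
      exact h' rfl
    have hpe : ∀ e ∈ C, G.fst e ≠ x → G.snd e ≠ x → (p (G.fst e) ↔ p (G.snd e)) := by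
      intro e he h1 h2
      have h1' : (⟨G.fst e, G.fst_vset he⟩ : G.vset C) ∉ ({⟨x, hxC⟩} : Set (G.vset C)) := by
        intro h; exact h1 (congrArg Subtype.val h)
      have h2' : (⟨G.snd e, G.snd_vset he⟩ : G.vset C) ∉ ({⟨x, hxC⟩} : Set (G.vset C)) := by
        intro h; exact h2 (congrArg Subtype.val h)
      have hedge : K.Reach Set.univ ⟨⟨G.fst e, G.fst_vset he⟩, h1'⟩
          ⟨⟨G.snd e, G.snd_vset he⟩, h2'⟩ :=
        Reach.edge K (e := ⟨⟨e, he⟩, h1', h2'⟩) (Set.mem_univ _)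
      constructor
      · rintro ⟨_, _, h⟩
        exact ⟨_, h2', h.trans _ _ _ hedge⟩
      · rintro ⟨_, _, h⟩
        exact ⟨_, h1', h.trans _ _ _ hedge.symm⟩
    let A : Finset E := C.filter (fun e => p (G.fst e) ∨ p (G.snd e))
    have hvA : ∀ z, z ∈ G.vset A → z ≠ x → p z := by
      rintro z ⟨e, he, h⟩ hz
      obtain ⟨heC, hor⟩ := Finset.mem_filter.mp he
      rcases h with rfl | rfl
      · rcases hor with h | h
        · exact h
        · exact (hpe e heC hz (hpx _ h)).mpr h
      · rcases hor with h | h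
        · exact (hpe e heC (hpx _ h) hz).mp h
        · exact h
    have hvB : ∀ z, z ∈ G.vset (C \ A) → ¬ p z := by
      rintro z ⟨e, he, h⟩ hpz
      obtain ⟨heC, hnA⟩ := Finset.mem_sdiff.mp he
      apply hnA
      refine Finset.mem_filter.mpr ⟨heC, ?_⟩
      rcases h with rfl | rfl
      · exact Or.inl hpz
      · exact Or.inr hpz
    obtain ⟨⟨u, hu⟩, hux⟩ := u
    obtain ⟨⟨w, hw⟩, hwx⟩ := w
    obtain ⟨eu, heu, hu'⟩ := id hu
    obtain ⟨ew, hew, hw'⟩ := id hw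
    refine nosplit A x (Finset.filter_subset _ _) ⟨eu, ?_⟩ ?_ ?_
    · by_contra hnot
      exact hvB u ⟨eu, Finset.mem_sdiff.mpr ⟨heu, hnot⟩, hu'⟩ ⟨hu, hux, Relation.EqvGen.refl _⟩
    · intro hAC
      obtain ⟨_, _, h⟩ := hvA w ⟨ew, hAC ▸ hew, hw'⟩ (by
        rintro rfl; exact hwx rfl)
      exact hr h
    · intro z hzA hzB
      by_contra hz
      exact hvB z hzB (hvA z hzA hz)

/-- The edge set of a non-separable subgraph is connected. -/
lemma nonsep_conn [Fintype E] (G : Multigraph V E) (H : G.Subgraph)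
    (hH : H.toMultigraph.NonSeparable)
    (C : Finset E) (hC : (C : Set E) = H.edges) : G.grank.Conn C := by
  classical
  have hmem : ∀ e, e ∈ C ↔ e ∈ H.edges := by
    intro e; rw [← hC]; simp
  intro A hA hAne hAC
  obtain ⟨a0, ha0⟩ := hAne
  have hB : (C \ A).Nonempty := by
    rw [Finset.sdiff_nonempty]; intro h; exact hAC (hA.antisymm h)
  obtain ⟨b0, hb0⟩ := hB
  rcases hH with ⟨_, h1⟩ | ⟨hconn, hloop, hcut⟩
  · exfalso
    rw [← hC] at h1
    have hsub : Subsingleton ((C : Set E)) := Finite.card_le_one_iff_subsingleton.mp h1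
    have : (⟨a0, hA ha0⟩ : (C : Set E)) = ⟨b0, (Finset.mem_sdiff.mp hb0).1⟩ :=
      Subsingleton.elim _ _
    have : a0 = b0 := congrArg Subtype.val this
    subst this
    exact (Finset.mem_sdiff.mp hb0).2 ha0
  by_contra hcon
  push Not at hcon
  have hreach : ∀ u w, H.toMultigraph.Reach Set.univ u w := by
    intro u w
    have := (Nat.card_eq_one_iff_unique.mp hconn).1
    exact Quotient.exact (Subsingleton.elim (Quotient.mk (H.toMultigraph.reachSetoid Set.univ) u)
      (Quotient.mk _ w))
  have hloop' : ∀ e ∈ C, G.fst e ≠ G.snd e := by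
    intro e he heq
    exact hloop ⟨e, (hmem e).mp he⟩ (Subtype.ext heq)
  -- a common vertex
  obtain ⟨x, hxA, hxB⟩ : ∃ x, x ∈ G.vset A ∧ x ∈ G.vset (C \ A) := by
    by_contra hno
    push Not at hno
    have hbC := (Finset.mem_sdiff.mp hb0).1
    have := Reach.invariant H.toMultigraph (A := Set.univ) (fun z => z.1 ∈ G.vset A) (by
      rintro ⟨e, he⟩ _
      have heC := (hmem e).mpr he
      by_cases heA : e ∈ A
      · exact ⟨fun _ => G.snd_vset heA, fun _ => G.fst_vset heA⟩
      · have heB : e ∈ C \ A := Finset.mem_sdiff.mpr ⟨heC, heA⟩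
        exact ⟨fun h => absurd (G.fst_vset heB) (hno _ h),
          fun h => absurd (G.snd_vset heB) (hno _ h)⟩)
      (hreach ⟨G.fst a0, H.fst_mem ((hmem _).mp (hA ha0))⟩ ⟨G.fst b0, H.fst_mem ((hmem _).mp hbC)⟩)
    exact hno _ (this.mp (G.fst_vset ha0)) (G.fst_vset hb0)
  -- edges at x with their other ends
  have other : ∀ e ∈ C, (G.fst e = x ∨ G.snd e = x) → ∃ u, u ≠ x ∧ u ∈ H.verts ∧
      (∀ D : Set E, G.Reach D (G.fst e) (G.snd e) ↔ G.Reach D x u) := by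
    intro e he h
    rcases h with rfl | rfl
    · exact ⟨G.snd e, (hloop' e he).symm, H.snd_mem ((hmem e).mp he), fun D => Iff.rfl⟩
    · exact ⟨G.fst e, hloop' e he, H.fst_mem ((hmem e).mp he),
        fun D => ⟨fun h => h.symm, fun h => h.symm⟩⟩
  obtain ⟨a, haA, hax⟩ := hxA
  obtain ⟨b, hbB, hbx⟩ := hxB
  have haC := hA haA
  obtain ⟨hbC, hbA⟩ := Finset.mem_sdiff.mp hbB
  obtain ⟨u, hux, huH, hu⟩ := other a haC hax
  obtain ⟨w, hwx, hwH, hw⟩ := other b hbC hbx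
  have hxH : x ∈ H.verts := by
    rcases hax with rfl | rfl
    · exact H.fst_mem ((hmem a).mp haC)
    · exact H.snd_mem ((hmem a).mp haC)
  let P : Finset E := C.filter (fun e => G.fst e ≠ x ∧ G.snd e ≠ x)
  -- connection avoiding x
  have huw : G.Reach P u w := by
    have hnc := hcut ⟨x, hxH⟩
    unfold IsCutVertex at hnc
    rw [show H.toMultigraph.numComponents = 1 from hconn, not_lt] at hnc
    set K := H.toMultigraph.deleteVerts {⟨x, hxH⟩} with hK
    have hsub : Subsingleton (Quotient (K.reachSetoid Set.univ)) :=
      Finite.card_le_one_iff_subsingleton.mp hnc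
    have hux' : (⟨u, huH⟩ : H.verts) ∉ ({⟨x, hxH⟩} : Set H.verts) :=
      fun h => hux (congrArg Subtype.val h)
    have hwx' : (⟨w, hwH⟩ : H.verts) ∉ ({⟨x, hxH⟩} : Set H.verts) :=
      fun h => hwx (congrArg Subtype.val h)
    have hr : K.Reach Set.univ ⟨⟨u, huH⟩, hux'⟩ ⟨⟨w, hwH⟩, hwx'⟩ :=
      Quotient.exact (Subsingleton.elim (Quotient.mk (K.reachSetoid Set.univ) _) (Quotient.mk _ _))
    refine Reach.map K G (fun z => z.1.1) ?_ hr
    rintro ⟨⟨e, he⟩, h1, h2⟩ _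
    refine Reach.edge G (e := e) ?_
    refine Finset.mem_coe.mpr (Finset.mem_filter.mpr ⟨(hmem e).mpr he, ?_, ?_⟩)
    · intro h; exact h1 (Subtype.ext h)
    · intro h; exact h2 (Subtype.ext h)
  have hxD : G.Reach ((insert b P : Finset E) : Set E) x u := by
    have h1 : G.Reach ((insert b P : Finset E) : Set E) x w :=
      (hw _).mp (Reach.edge G (by simp))
    exact h1.trans _ _ _ (Reach.mono G (by simp) huw).symm
  have hra := (G.grank_cl (insert b P) a).mpr ((hu _).mpr hxD)
  have hPC : P ⊆ C := Finset.filter_subset _ _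
  have hsep : G.grank.r A + G.grank.r (C \ A) ≤ G.grank.r (A ∪ (C \ A)) := by
    rw [Finset.union_sdiff_of_subset hA]; exact hcon
  have s1 := G.grank.sep_restrict hsep (X := P ∩ A) (Y := insert b (P \ A))
    Finset.inter_subset_right (by
      intro y hy
      rcases Finset.mem_insert.mp hy with rfl | hy
      · exact hbB
      · exact Finset.sdiff_subset_sdiff hPC subset_rfl hy)
  have s2 := G.grank.sep_restrict hsep (X := insert a (P ∩ A)) (Y := insert b (P \ A))
    (Finset.insert_subset haA Finset.inter_subset_right) (by
      intro y hy
      rcases Finset.mem_insert.mp hy with rfl | hy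
      · exact hbB
      · exact Finset.sdiff_subset_sdiff hPC subset_rfl hy)
  have t1 : P ∩ A ∪ insert b (P \ A) = insert b P := by
    ext y; simp; tauto
  have t2 : insert a (P ∩ A) ∪ insert b (P \ A) = insert a (insert b P) := by
    ext y; simp; tauto
  rw [t1] at s1
  rw [t2] at s2
  have hra' : G.grank.r (insert a (P ∩ A)) = G.grank.r (P ∩ A) := by omega
  have hfin := (hu _).mp ((G.grank_cl _ _).mp hra')
  have := Reach.invariant G (fun z => z = x) (by
    intro e he
    have heP : e ∈ P := by simp at he; exact he.1
    obtain ⟨_, h1, h2⟩ := Finset.mem_filter.mp heP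
    simp [h1, h2]) hfin
  exact hux (this.mp rfl)

end Multigraph

end

section

namespace Multigraph

open Polynomial

variable {V E : Type} [Fintype V] [DecidableEq E] [Fintype E]

lemma flowPoly_eq_fp (G : Multigraph V E) :
    G.flowPoly = G.grank.fp (Finset.univ : Finset E) := by
  have hft : Fintype.ofFinite E = ‹Fintype E› := Subsingleton.elim _ _
  unfold flowPoly
  rw [hft]
  simp only [RankFn.fp, Finset.powerset_univ, Finset.card_univ, Nat.card_eq_fintype_card]
  refine Finset.sum_congr rfl fun A _ => ?_
  have h := G.grank_r A
  have : A.card + G.ncomp ↑A - Fintype.card V = A.card - G.grank.r A := by omega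
  rw [this]

lemma grank_univ (G : Multigraph V E) (hconn : G.Connected) :
    G.grank.r Finset.univ + 1 = Fintype.card V := by
  have h := G.grank_r Finset.univ
  rw [Finset.coe_univ] at h
  have h1 : G.ncomp Set.univ = 1 := hconn
  omega

lemma grank_erase (G : Multigraph V E) (hbl : G.Bridgeless) (e : E) :
    G.grank.r (Finset.univ.erase e) = G.grank.r Finset.univ := by
  have h := G.grank_r Finset.univ
  have h2 := G.grank_r (Finset.univ.erase e)
  have h3 := hbl e
  unfold IsBridge numComponents at h3
  have hs : ((Finset.univ.erase e : Finset E) : Set E) = {e' | e' ≠ e} := by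
    ext x; simp
  rw [hs] at h2
  rw [Finset.coe_univ] at h
  have h4 := G.grank.r_mono (Finset.erase_subset e Finset.univ)
  omega

lemma reach_of_connected {V E : Type} (G : Multigraph V E) (hconn : G.Connected) (u w : V) :
    G.Reach Set.univ u w := by
  have := (Nat.card_eq_one_iff_unique.mp hconn).1
  exact Quotient.exact (Subsingleton.elim (Quotient.mk (G.reachSetoid Set.univ) u)
      (Quotient.mk _ w))

lemma Subgraph.eq_of {G : Multigraph V E} {H K : G.Subgraph} (h1 : H.verts = K.verts)
    (h2 : H.edges = K.edges) : H = K := by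
  cases H; cases K; simp only at h1 h2; subst h1; subst h2; rfl

lemma nonsep_verts (G : Multigraph V E) (H : G.Subgraph) (hH : H.toMultigraph.NonSeparable)
    (C : Finset E) (hC : (C : Set E) = H.edges) (hne : C.Nonempty) : H.verts = G.vset C := by
  have hmem : ∀ e, e ∈ C ↔ e ∈ H.edges := by
    intro e; rw [← hC]; simp
  apply Set.Subset.antisymm
  · intro v hv
    obtain ⟨e, he⟩ := hne
    rcases hH with ⟨h1, _⟩ | ⟨hconn, _⟩
    · have hsub : Subsingleton H.verts := Finite.card_le_one_iff_subsingleton.mp h1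
      have : (⟨v, hv⟩ : H.verts) = ⟨G.fst e, H.fst_mem ((hmem e).mp he)⟩ := Subsingleton.elim _ _
      have : v = G.fst e := congrArg Subtype.val this
      rw [this]
      exact G.fst_vset he
    · have := Reach.invariant H.toMultigraph (A := Set.univ) (fun z => z.1 ∈ G.vset C) (by
        rintro ⟨f, hf⟩ _
        have hfC := (hmem f).mpr hf
        exact ⟨fun _ => G.snd_vset hfC, fun _ => G.fst_vset hfC⟩)
        (reach_of_connected _ hconn ⟨G.fst e, H.fst_mem ((hmem _).mp he)⟩ ⟨v, hv⟩)
      exact this.mp (G.fst_vset he)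
  · rintro z ⟨e, he, rfl | rfl⟩
    · exact H.fst_mem ((hmem e).mp he)
    · exact H.snd_mem ((hmem e).mp he)

lemma card_blocks (G : Multigraph V E) (hE : Nonempty E) (hconn : G.Connected)
    (P : Finset (Finset E))
    (hP : ∀ C ∈ P, C.Nonempty ∧ C ⊆ Finset.univ ∧ G.grank.Conn C ∧
      G.grank.r C + G.grank.r (Finset.univ \ C) ≤ G.grank.r Finset.univ)
    (hcov : ∀ x ∈ (Finset.univ : Finset E), ∃ C ∈ P, x ∈ C)
    (hl : ∀ C ∈ P, (∃ e, C = {e} ∧ G.fst e = G.snd e) ∨ 2 ≤ C.card) :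
    Nat.card {H : G.Subgraph // IsBlock H} = P.card := by
  classical
  have hns : ∀ C ∈ P, (G.csub C).toMultigraph.NonSeparable := fun C hC =>
    G.csub_nonsep C (hP C hC).1 (hP C hC).2.2.1 (hl C hC)
  -- connected sets meeting a component lie inside it
  have hin : ∀ C ∈ P, ∀ (H : G.Subgraph), H.toMultigraph.NonSeparable → ∀ e ∈ C,
      e ∈ H.edges → H.edges ⊆ C := by
    intro C hC H hH e heC heH
    have hc : ((Finset.univ.filter (· ∈ H.edges) : Finset E) : Set E) = H.edges := by
      ext x; simp
    have := G.grank.conn_subset (hP C hC).2.1 (Finset.subset_univ _) (hP C hC).2.2.2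
      (G.nonsep_conn H hH _ hc) heC (Finset.mem_filter.mpr ⟨Finset.mem_univ _, heH⟩)
    rw [← hc]
    exact_mod_cast this
  have hbl : ∀ C ∈ P, IsBlock (G.csub C) := by
    intro C hC
    refine ⟨hns C hC, fun H' hH' _ he => ?_⟩
    obtain ⟨e, heC⟩ := (hP C hC).1
    have h1 : (C : Set E) = H'.edges :=
      Set.Subset.antisymm he (hin C hC H' hH' e heC (he heC))
    exact Subgraph.eq_of (G.nonsep_verts H' hH' C h1 (hP C hC).1) h1.symm
  let f : P → {H : G.Subgraph // IsBlock H} := fun C => ⟨G.csub C.1, hbl C.1 C.2⟩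
  have hf : Function.Bijective f := by
    constructor
    · rintro ⟨C, hC⟩ ⟨D, hD⟩ h
      have h1 : G.csub C = G.csub D := congrArg Subtype.val h
      have h2 : (C : Set E) = (D : Set E) := congrArg Subgraph.edges h1
      exact Subtype.ext (Finset.coe_injective h2)
    · rintro ⟨H, hH, hmax⟩
      suffices h : ∃ C ∈ P, H.verts ⊆ G.vset C ∧ H.edges ⊆ (C : Set E) by
        obtain ⟨C, hC, h1, h2⟩ := h
        exact ⟨⟨C, hC⟩, Subtype.ext (hmax (G.csub C) (hns C hC) h1 h2)⟩
      by_cases hne : H.edges.Nonempty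
      · obtain ⟨e, he⟩ := hne
        obtain ⟨C, hC, heC⟩ := hcov e (Finset.mem_univ _)
        have hsub := hin C hC H hH e heC he
        refine ⟨C, hC, ?_, hsub⟩
        have hc : ((Finset.univ.filter (· ∈ H.edges) : Finset E) : Set E) = H.edges := by
          ext x; simp
        rw [G.nonsep_verts H hH _ hc ⟨e, by simpa using he⟩]
        rintro z ⟨g, hg, h⟩
        exact ⟨g, hsub (by simpa using hg), h⟩
      · have hem : H.edges = ∅ := Set.not_nonempty_iff_eq_empty.mp hne
        have hss : ∀ u ∈ H.verts, ∀ w ∈ H.verts, u = w := by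
          intro u hu w hw
          rcases hH with ⟨h1, _⟩ | ⟨hc, _⟩
          · have hsub : Subsingleton H.verts := Finite.card_le_one_iff_subsingleton.mp h1
            exact congrArg Subtype.val (Subsingleton.elim (⟨u, hu⟩ : H.verts) ⟨w, hw⟩)
          · have := Reach.invariant H.toMultigraph (A := Set.univ) (fun z => z.1 = u) (by
              rintro ⟨g, hg⟩ _
              exact absurd ⟨g, hg⟩ hne) (reach_of_connected _ hc ⟨u, hu⟩ ⟨w, hw⟩)
            exact (this.mp rfl).symm
        obtain ⟨e0⟩ := hE
        by_cases hv : H.verts.Nonempty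
        · obtain ⟨v, hv⟩ := hv
          have := Reach.invariant G (A := Set.univ) (fun z => z ∈ G.vset Finset.univ) (by
            intro g _
            exact ⟨fun _ => G.snd_vset (Finset.mem_univ _), fun _ => G.fst_vset (Finset.mem_univ _)⟩)
            (reach_of_connected _ hconn (G.fst e0) v)
          obtain ⟨e, _, h⟩ := this.mp (G.fst_vset (Finset.mem_univ _))
          obtain ⟨C, hC, heC⟩ := hcov e (Finset.mem_univ _)
          refine ⟨C, hC, ?_, by rw [hem]; exact Set.empty_subset _⟩
          intro w hw
          rw [hss w hw v hv]
          exact ⟨e, heC, h⟩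
        · obtain ⟨C, hC, heC⟩ := hcov e0 (Finset.mem_univ _)
          refine ⟨C, hC, ?_, by rw [hem]; exact Set.empty_subset _⟩
          rw [Set.not_nonempty_iff_eq_empty.mp hv]
          exact Set.empty_subset _
  rw [← Nat.card_congr (Equiv.ofBijective f hf), Nat.card_eq_fintype_card, Fintype.card_coe]

lemma rootMult_prod {ι : Type} [DecidableEq ι] (P : Finset ι) (f : ι → ℝ[X])
    (h : ∀ i ∈ P, (f i).rootMultiplicity 1 = 1) :
    (∏ i ∈ P, f i) ≠ 0 ∧ (∏ i ∈ P, f i).rootMultiplicity 1 = P.card := by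
  induction P using Finset.induction_on with
  | empty => simp
  | insert a s ha ih =>
    obtain ⟨h1, h2⟩ := ih fun i hi => h i (Finset.mem_insert_of_mem hi)
    have h3 := h a (Finset.mem_insert_self _ _)
    have h4 : f a ≠ 0 := by
      intro h0; rw [h0] at h3; simp at h3
    have h5 : f a * ∏ i ∈ s, f i ≠ 0 := mul_ne_zero h4 h1
    rw [Finset.prod_insert ha, Finset.card_insert_of_notMem ha]
    refine ⟨h5, ?_⟩
    rw [rootMultiplicity_mul h5, h2, h3, add_comm]

lemma main_aux (G : Multigraph V E) (hE : Nonempty E) (hconn : G.Connected)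
    (hbl : G.Bridgeless) :
    (∀ q : ℝ, q < 1 →
      0 < (-1 : ℝ) ^ ((Fintype.card E : ℤ) - Fintype.card V + 1) * G.flowPoly.eval q) ∧
      G.flowPoly.rootMultiplicity 1 = Nat.card {H : G.Subgraph // IsBlock H} ∧
      (∀ q : ℝ, 1 < q → q ≤ 32 / 27 →
        0 < (-1 : ℝ) ^ ((Fintype.card E : ℤ) - Fintype.card V +
          Nat.card {H : G.Subgraph // IsBlock H} + 1) * G.flowPoly.eval q) := by
  set M := G.grank with hM
  have hr := G.grank_univ hconn
  have hle := M.r_le_card Finset.univ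
  rw [Finset.card_univ] at hle
  have her := G.grank_erase hbl
  rw [← hM] at hr her
  obtain ⟨P, hP, hcov, hfp, hnull⟩ := M.exists_components _ Finset.univ rfl
  have hl : ∀ C ∈ P, (∃ e, C = {e} ∧ G.fst e = G.snd e) ∨ 2 ≤ C.card := by
    intro C hC
    obtain ⟨hne, _, _, hsep⟩ := hP C hC
    by_cases h2 : 2 ≤ C.card
    · exact Or.inr h2
    · left
      have h1 : C.card = 1 := by
        have := hne.card_pos
        omega
      obtain ⟨e, rfl⟩ := Finset.card_eq_one.mp h1
      refine ⟨e, rfl, ?_⟩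
      rw [← G.grank_single, ← hM]
      rw [Finset.sdiff_singleton_eq_erase, her] at hsep
      omega
  have hb := G.card_blocks hE hconn P hP hcov hl
  have hloop : ∀ e, G.fst e = G.snd e → M.fp {e} = X - 1 := by
    intro e he
    have := M.fp_loop (e := e) (S := ∅) (by simp) ((G.grank_single e).mpr he)
    rw [insert_empty_eq] at this
    rw [this]
    simp [RankFn.fp]
  have hroot : ∀ C ∈ P, (M.fp C).rootMultiplicity 1 = 1 := by
    intro C hC
    rcases hl C hC with ⟨e, rfl, he⟩ | h2
    · rw [hloop e he]
      have := rootMultiplicity_X_sub_C_self (x := (1 : ℝ))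
      simpa using this
    · exact M.rootMult_of_conn h2 (hP C hC).2.2.1
  have hF := G.flowPoly_eq_fp
  rw [← hM] at hF
  rw [hb, hF]
  have hexp : (Fintype.card E : ℤ) - Fintype.card V + 1 =
      ((Fintype.card E - M.r Finset.univ : ℕ) : ℤ) := by omega
  refine ⟨?_, ?_, ?_⟩
  · intro q hq
    have := RankFn.fp_pos_lt_one hq _ M Finset.univ rfl (fun e _ => her e)
    rw [Finset.card_univ] at this
    rw [hexp, zpow_natCast]
    exact this
  · rw [hfp]
    exact (rootMult_prod P _ hroot).2
  · intro q h1 h2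
    have hpos : ∀ C ∈ P, 0 < (-1 : ℝ) ^ (C.card - M.r C + 1) * (M.fp C).eval q := by
      intro C hC
      rcases hl C hC with ⟨e, rfl, he⟩ | hc
      · rw [hloop e he, (G.grank_single e).mpr he]
        simp
        linarith
      · exact RankFn.fp_pos_gt_one h1 h2 M C hc (hP C hC).2.2.1
    have hprod := Finset.prod_pos hpos
    rw [Finset.prod_mul_distrib, Finset.prod_pow_eq_pow_sum, Finset.sum_add_distrib, ← hnull,
      ← eval_prod, ← hfp, Finset.card_univ] at hprod
    simp only [Finset.sum_const, smul_eq_mul, mul_one] at hprod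
    have hexp2 : (Fintype.card E : ℤ) - Fintype.card V + P.card + 1 =
      ((Fintype.card E - M.r Finset.univ + P.card : ℕ) : ℤ) := by push_cast; omega
    rw [hexp2, zpow_natCast]
    exact hprod

end Multigraph

end

open Multigraph in
/-- Wakelin. Let `G = (V,E)` be a bridgeless connected finite
multigraph with at least one edge, `n = |V|`, `m = |E|` and `b` blocks. Then
(i) `(−1)^{m−n+1} F(G,q) > 0` for all real `q < 1`; (ii) `F(G,q)` has a root of
multiplicity exactly `b` at `q = 1`; (iii) `(−1)^{m−n+b+1} F(G,q) > 0` for all real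
`q` with `1 < q ≤ 32/27`. -/
theorem flowPoly_zero_free_Wakelin {V E : Type} [Fintype V] [Fintype E]
    (G : Multigraph V E) (hE : Nonempty E) (hconn : G.Connected) (hbl : G.Bridgeless) :
    (∀ q : ℝ, q < 1 →
      0 < (-1 : ℝ) ^ ((Fintype.card E : ℤ) - Fintype.card V + 1) * G.flowPoly.eval q) ∧
      G.flowPoly.rootMultiplicity 1 = Nat.card {H : G.Subgraph // IsBlock H} ∧
      (∀ q : ℝ, 1 < q → q ≤ 32 / 27 →
        0 < (-1 : ℝ) ^ ((Fintype.card E : ℤ) - Fintype.card V +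
          Nat.card {H : G.Subgraph // IsBlock H} + 1) * G.flowPoly.eval q) := by
  classical
  exact G.main_aux hE hconn hbl
end

section
/- If G is a bridgeless finite multigraph with at most one vertex of degree larger than 3, then F(G,q) ≠ 0 for all real q with 1 < q < 2. -/
namespace FlowAux

open Classical in
/-- Vertex map identifying `v` with `w`. -/
noncomputable def mg {V : Type} (v w : V) (u : V) : V := if u = v then w else u

/-- Adjacency by an edge of the multiset `T`. -/
def rel {V : Type} (T : Multiset (Sym2 V)) (a b : V) : Prop := s(a, b) ∈ T

/-- Number of connected components. -/
noncomputable def nc {V : Type} (T : Multiset (Sym2 V)) : ℕ :=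
  Nat.card (Quotient (Relation.EqvGen.setoid (rel T)))

/-- Functions constant along edges. -/
def Cst {V : Type} (T : Multiset (Sym2 V)) : Type :=
  {f : V → Bool // ∀ a b, s(a, b) ∈ T → f a = f b}

theorem card_cst {V : Type} [Fintype V] (T : Multiset (Sym2 V)) :
    Nat.card (Cst T) = 2 ^ nc T := by
  have e : Cst T ≃ (Quotient (Relation.EqvGen.setoid (rel T)) → Bool) :=
    { toFun := fun f => Quotient.lift f.1 (by
        intro a b h
        induction h with
        | rel a b h => exact f.2 a b h
        | refl a => rfl
        | symm a b _ ih => exact ih.symm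
        | trans a b c _ _ h1 h2 => exact h1.trans h2)
      invFun := fun g => ⟨fun v => g (Quotient.mk _ v), fun a b h =>
        congrArg g (Quotient.sound (Relation.EqvGen.rel a b h))⟩
      left_inv := fun f => rfl
      right_inv := fun g => by
        funext x
        induction x using Quotient.inductionOn with
        | h v => rfl }
  rw [Nat.card_congr e, nc, Nat.card_fun]
  simp

instance {V : Type} [Fintype V] (T : Multiset (Sym2 V)) : Finite (Cst T) := by
  unfold Cst; infer_instance

theorem nc_mg {V : Type} [Fintype V] (T : Multiset (Sym2 V)) {v w : V} (h : v ≠ w) :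
    nc (T.map (Sym2.map (mg v w))) = nc (s(w, v) ::ₘ T) + 1 := by
  classical
  have e : Cst (T.map (Sym2.map (mg v w))) ≃ Cst (s(w, v) ::ₘ T) × Bool :=
    { toFun := fun f => (⟨fun u => f.1 (mg v w u), by
          intro a b hab
          rcases Multiset.mem_cons.1 hab with h1 | h1
          · rcases Sym2.eq_iff.1 h1 with ⟨rfl, rfl⟩ | ⟨rfl, rfl⟩ <;> simp [mg]
          · exact f.2 _ _ (Multiset.mem_map.2 ⟨_, h1, rfl⟩)⟩, f.1 v)
      invFun := fun g => ⟨fun u => if u = v then g.2 else g.1.1 u, by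
          intro a b hab
          obtain ⟨x, hx, hx2⟩ := Multiset.mem_map.1 hab
          induction x using Sym2.ind with
          | _ p r =>
            have hk : ∀ u, (if mg v w u = v then g.2 else g.1.1 (mg v w u)) = g.1.1 u := by
              intro u
              have := g.1.2 w v (by simp)
              by_cases hu : u = v
              · simp [mg, hu, h.symm, this]
              · simp [mg, hu]
            have h2 := g.1.2 p r (Multiset.mem_cons_of_mem hx)
            rw [Sym2.map_mk] at hx2
            rcases Sym2.eq_iff.1 hx2 with ⟨rfl, rfl⟩ | ⟨rfl, rfl⟩
            · simp only [hk, h2]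
            · simp only [hk, h2]⟩
      left_inv := fun f => by
        apply Subtype.ext
        funext u
        by_cases hu : u = v <;> simp [mg, hu]
      right_inv := fun g => by
        have := g.1.2 w v (by simp)
        refine Prod.ext (Subtype.ext ?_) ?_
        · funext u
          by_cases hu : u = v
          · simp [mg, hu, h.symm, this]
          · simp [mg, hu]
        · simp }
  have := Nat.card_congr e
  rw [Nat.card_prod, card_cst, card_cst] at this
  have h2 : 2 ^ nc (T.map (Sym2.map (mg v w))) = 2 ^ (nc (s(w, v) ::ₘ T) + 1) := by
    rw [this, pow_succ]; simp
  exact Nat.pow_right_injective (le_refl 2) h2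

/-- If `X` is a union of components separating `v` from `w`. -/
theorem nc_sep {V : Type} [Fintype V] (T : Multiset (Sym2 V)) {v w : V} (X : Set V)
    (hv : v ∈ X) (hw : w ∉ X) (hX : ∀ a b, s(a, b) ∈ T → (a ∈ X ↔ b ∈ X)) :
    nc (s(w, v) ::ₘ T) + 1 = nc T := by
  classical
  have e : Cst T ≃ Cst (s(w, v) ::ₘ T) × Bool :=
    { toFun := fun f => (⟨fun u => if u ∈ X then (f.1 u ^^ (f.1 v ^^ f.1 w)) else f.1 u, by
          intro a b hab
          rcases Multiset.mem_cons.1 hab with h1 | h1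
          · rcases Sym2.eq_iff.1 h1 with ⟨rfl, rfl⟩ | ⟨rfl, rfl⟩ <;> simp [hv, hw]
          · have := f.2 a b h1
            have := hX a b h1
            simp_all⟩, (f.1 v ^^ f.1 w))
      invFun := fun g => ⟨fun u => if u ∈ X then (g.1.1 u ^^ g.2) else g.1.1 u, by
          intro a b hab
          have := g.1.2 a b (Multiset.mem_cons_of_mem hab)
          have := hX a b hab
          simp_all⟩
      left_inv := fun f => by
        apply Subtype.ext
        funext u
        by_cases hu : u ∈ X <;> simp [hu]
      right_inv := fun g => by
        have := g.1.2 w v (by simp)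
        refine Prod.ext (Subtype.ext ?_) ?_
        · funext u
          by_cases hu : u ∈ X
          · simp only [hu, hv, hw, this, if_true, if_false]
            cases g.1.1 u <;> cases g.1.1 v <;> cases g.2 <;> rfl
          · simp [hu]
        · simp only [hv, hw, this, if_true, if_false]
          cases g.1.1 v <;> cases g.2 <;> rfl }
  have := Nat.card_congr e
  rw [Nat.card_prod, card_cst, card_cst] at this
  have h2 : 2 ^ nc T = 2 ^ (nc (s(w, v) ::ₘ T) + 1) := by
    rw [this, pow_succ]; simp
  exact (Nat.pow_right_injective (le_refl 2) h2).symm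

theorem eqvGen_cst {V : Type} (T : Multiset (Sym2 V)) {a b : V}
    (h : Relation.EqvGen (rel T) a b) (f : Cst T) : f.1 a = f.1 b := by
  induction h with
  | rel a b h => exact f.2 a b h
  | refl a => rfl
  | symm a b _ ih => exact ih.symm
  | trans a b c _ _ h1 h2 => exact h1.trans h2

theorem nc_conn {V : Type} [Fintype V] (T : Multiset (Sym2 V)) {v w : V}
    (h : Relation.EqvGen (rel T) w v) :
    nc (s(w, v) ::ₘ T) = nc T := by
  have e : Cst T ≃ Cst (s(w, v) ::ₘ T) := Equiv.subtypeEquivRight (by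
    intro f
    constructor
    · intro hf a b hab
      rcases Multiset.mem_cons.1 hab with h1 | h1
      · have := eqvGen_cst T h ⟨f, hf⟩
        rcases Sym2.eq_iff.1 h1 with ⟨rfl, rfl⟩ | ⟨rfl, rfl⟩
        · exact this
        · exact this.symm
      · exact hf a b h1
    · intro hf a b hab
      exact hf a b (Multiset.mem_cons_of_mem hab))
  have := Nat.card_congr e
  rw [card_cst, card_cst] at this
  exact (Nat.pow_right_injective (le_refl 2) this).symm

theorem comp_closed {V : Type} (T : Multiset (Sym2 V)) (y : V) (a b : V) (hab : s(a, b) ∈ T) :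
    (a ∈ {u | Relation.EqvGen (rel T) y u} ↔ b ∈ {u | Relation.EqvGen (rel T) y u}) :=
  ⟨fun h => h.trans _ _ _ (.rel _ _ hab), fun h => h.trans _ _ _ (.symm _ _ (.rel _ _ hab))⟩

theorem nc_zero {V : Type} [Fintype V] : nc (0 : Multiset (Sym2 V)) = Fintype.card V := by
  have e : Cst (0 : Multiset (Sym2 V)) ≃ (V → Bool) := Equiv.subtypeUnivEquiv (by simp)
  have := Nat.card_congr e
  rw [card_cst, Nat.card_fun] at this
  simp only [Nat.card_eq_fintype_card, Fintype.card_bool] at this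
  exact Nat.pow_right_injective (le_refl 2) this

theorem card_le_nc {V : Type} [Fintype V] (T : Multiset (Sym2 V)) :
    Fintype.card V ≤ T.card + nc T := by
  induction T using Multiset.induction_on with
  | empty => simp [nc_zero]
  | cons e T ih =>
    induction e using Sym2.ind with
    | _ a b =>
      by_cases h : Relation.EqvGen (rel T) a b
      · rw [nc_conn T h, Multiset.card_cons]; omega
      · have := nc_sep T (v := a) (w := b) {u | Relation.EqvGen (rel T) a u} (.refl a) h
          (comp_closed T a)
        rw [Sym2.eq_swap, Multiset.card_cons]; omega

theorem powerset_map' {α β : Type} (f : α → β) (s : Multiset α) :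
    (s.map f).powerset = s.powerset.map (Multiset.map f) := by
  induction s using Multiset.induction_on with
  | empty => simp
  | cons a s ih =>
    rw [Multiset.map_cons, Multiset.powerset_cons, Multiset.powerset_cons, ih, Multiset.map_add,
      Multiset.map_map, Multiset.map_map]
    congr 1
    apply Multiset.map_congr rfl
    intro x _
    simp

/-- Unnormalised flow polynomial. -/
noncomputable def fl {V : Type} (q : ℝ) (M : Multiset (Sym2 V)) : ℝ :=
  (-1) ^ M.card * (M.powerset.map fun T => (-1) ^ T.card * q ^ (T.card + nc T)).sum

theorem fl_contract {V : Type} [Fintype V] (q : ℝ) (M : Multiset (Sym2 V)) {v w : V}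
    (h : v ≠ w) :
    fl q (s(w, v) ::ₘ M) = fl q (M.map (Sym2.map (mg v w))) - fl q M := by
  unfold fl
  rw [Multiset.powerset_cons, powerset_map', Multiset.map_add, Multiset.sum_add, Multiset.map_map,
    Multiset.map_map, Multiset.card_cons, Multiset.card_map]
  have : (M.powerset.map ((fun T => (-1) ^ T.card * q ^ (T.card + nc T)) ∘
      Multiset.cons s(w, v))) = M.powerset.map fun T => (-1 : ℝ) * (((fun T => (-1) ^ T.card *
      q ^ (T.card + nc T)) ∘ Multiset.map (Sym2.map (mg v w))) T) := by
    apply Multiset.map_congr rfl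
    intro T _
    simp only [Function.comp, Multiset.card_cons, Multiset.card_map, nc_mg T h]
    ring
  rw [this, Multiset.sum_map_mul_left]
  ring

theorem fl_loop {V : Type} [Fintype V] (q : ℝ) (M : Multiset (Sym2 V)) (w : V) :
    fl q (s(w, w) ::ₘ M) = (q - 1) * fl q M := by
  unfold fl
  rw [Multiset.powerset_cons, Multiset.map_add, Multiset.sum_add, Multiset.map_map,
    Multiset.card_cons]
  have : (M.powerset.map ((fun T => (-1) ^ T.card * q ^ (T.card + nc T)) ∘
      Multiset.cons s(w, w))) = M.powerset.map fun T => (-q : ℝ) * (((fun T => (-1) ^ T.card *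
      q ^ (T.card + nc T))) T) := by
    apply Multiset.map_congr rfl
    intro T _
    simp only [Function.comp, Multiset.card_cons, nc_conn T (.refl w)]
    ring
  rw [this, Multiset.sum_map_mul_left]
  ring

/-- Identifying vertices of different components. -/
theorem fl_merge {V : Type} [Fintype V] (q : ℝ) (M : Multiset (Sym2 V)) {v w : V} (X : Set V)
    (hv : v ∈ X) (hw : w ∉ X) (hX : ∀ a b, s(a, b) ∈ M → (a ∈ X ↔ b ∈ X)) :
    fl q (M.map (Sym2.map (mg v w))) = fl q M := by
  have hne : v ≠ w := fun h => hw (h ▸ hv)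
  unfold fl
  rw [powerset_map', Multiset.map_map, Multiset.card_map]
  congr 2
  apply Multiset.map_congr rfl
  intro T hT
  have hT := Multiset.mem_powerset.1 hT
  simp only [Function.comp, Multiset.card_map, nc_mg T hne]
  rw [nc_sep T X hv hw (fun a b hab => hX a b (Multiset.mem_of_le hT hab))]

theorem fl_bridge {V : Type} [Fintype V] (q : ℝ) (M : Multiset (Sym2 V)) {v w : V} (X : Set V)
    (hv : v ∈ X) (hw : w ∉ X) (hX : ∀ a b, s(a, b) ∈ M → (a ∈ X ↔ b ∈ X)) :
    fl q (s(w, v) ::ₘ M) = 0 := by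
  have hne : v ≠ w := fun h => hw (h ▸ hv)
  rw [fl_contract q M hne, fl_merge q M X hv hw hX, sub_self]

theorem map_mg_eq {V : Type} (M : Multiset (Sym2 V)) {x w : V}
    (hx : ∀ y, s(x, y) ∉ M) : M.map (Sym2.map (mg x w)) = M := by
  conv_rhs => rw [← Multiset.map_id M]
  apply Multiset.map_congr rfl
  intro e he
  induction e using Sym2.ind with
  | _ a b =>
    have ha : a ≠ x := by rintro rfl; exact hx _ he
    have hb : b ≠ x := by rintro rfl; rw [Sym2.eq_swap] at he; exact hx _ he
    simp [mg, ha, hb]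

theorem isolated_closed {V : Type} (M : Multiset (Sym2 V)) {x : V}
    (hx : ∀ y, s(x, y) ∉ M) : ∀ a b, s(a, b) ∈ M → (a ∈ ({x} : Set V) ↔ b ∈ ({x} : Set V)) := by
  intro a b he
  have ha : a ≠ x := by rintro rfl; exact hx _ he
  have hb : b ≠ x := by rintro rfl; rw [Sym2.eq_swap] at he; exact hx _ he
  simp [ha, hb]

theorem fl_leaf {V : Type} [Fintype V] (q : ℝ) (M : Multiset (Sym2 V)) {x y : V}
    (hx : ∀ y, s(x, y) ∉ M) (h : y ≠ x) : fl q (s(x, y) ::ₘ M) = 0 := by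
  rw [Sym2.eq_swap]
  exact fl_bridge q M {x} rfl h (isolated_closed M hx)

theorem fl_series {V : Type} [Fintype V] (q : ℝ) (M : Multiset (Sym2 V)) {x y z : V}
    (hx : ∀ y, s(x, y) ∉ M) (hy : y ≠ x) (hz : z ≠ x) :
    fl q (s(x, y) ::ₘ s(x, z) ::ₘ M) = fl q (s(y, z) ::ₘ M) := by
  rw [Sym2.eq_swap, fl_contract q _ hy.symm, fl_leaf q M hx hz, Multiset.map_cons, map_mg_eq M hx]
  simp [mg, hz]

theorem nc_leaf {V : Type} [Fintype V] (M : Multiset (Sym2 V)) {x y : V}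
    (hx : ∀ y, s(x, y) ∉ M) (h : y ≠ x) : nc (s(x, y) ::ₘ M) + 1 = nc M := by
  rw [Sym2.eq_swap]
  exact nc_sep M {x} rfl h (isolated_closed M hx)

theorem nc_series {V : Type} [Fintype V] (M : Multiset (Sym2 V)) {x y z : V}
    (hx : ∀ y, s(x, y) ∉ M) (hy : y ≠ x) (hz : z ≠ x) :
    nc (s(x, y) ::ₘ s(x, z) ::ₘ M) + 1 = nc (s(y, z) ::ₘ M) := by
  have := nc_mg (s(x, z) ::ₘ M) hy.symm
  rw [Multiset.map_cons, map_mg_eq M hx] at this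
  rw [Sym2.eq_swap, ← this]
  simp [mg, hz]

/-- Two-sum identity. -/
theorem fl_twosum {V : Type} [Fintype V] (q : ℝ) (w : V) (A : Set V) (n : ℕ) :
    ∀ (M : Multiset (Sym2 V)) (y z : V), M.card = n →
    (∀ a b, s(a, b) ∈ M → ((a ∈ A ∨ a = w) ∧ (b ∈ A ∨ b = w)) ∨
      ((a ∉ A ∨ a = w) ∧ (b ∉ A ∨ b = w))) →
    (y ∈ A ∨ y = w) → (z ∉ A ∨ z = w) →
    fl q (s(w, y) ::ₘ s(w, z) ::ₘ M) = (q - 1) * fl q (s(y, z) ::ₘ M) := by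
  induction n with
  | zero =>
    intro M y z hM _ hy hz
    obtain rfl := Multiset.card_eq_zero.1 hM
    by_cases hyw : y = w
    · subst hyw; rw [fl_loop]
    by_cases hzw : z = w
    · subst hzw; rw [Multiset.cons_swap, fl_loop, Sym2.eq_swap]
    have hyA := hy.resolve_right hyw
    have hzA := hz.resolve_right hzw
    have hyz : z ≠ y := by rintro rfl; exact hzA hyA
    rw [fl_leaf q 0 (by simp) hyz, Sym2.eq_swap, fl_leaf q _ _ (Ne.symm hyw), mul_zero]
    intro u hu
    simp only [Multiset.cons_zero, Multiset.mem_singleton, Sym2.eq_iff] at hu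
    rcases hu with ⟨h, _⟩ | ⟨h, _⟩
    · exact hyw h
    · exact hyz h.symm
  | succ n ih =>
    intro M y z hM hsep hy hz
    obtain ⟨e, M', rfl⟩ : ∃ e M', M = e ::ₘ M' := by
      obtain ⟨e, he⟩ := Multiset.card_pos_iff_exists_mem.1 (by omega : 0 < M.card)
      exact ⟨e, _, (Multiset.exists_cons_of_mem he).choose_spec⟩
    have hM' : M'.card = n := by simpa using hM
    have hsep' : ∀ a b, s(a, b) ∈ M' → ((a ∈ A ∨ a = w) ∧ (b ∈ A ∨ b = w)) ∨
      ((a ∉ A ∨ a = w) ∧ (b ∉ A ∨ b = w)) :=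
      fun a b hab => hsep a b (Multiset.mem_cons_of_mem hab)
    rw [Multiset.cons_swap _ e, Multiset.cons_swap _ e, Multiset.cons_swap _ e]
    obtain ⟨a, b, rfl, hb⟩ : ∃ a b, e = s(a, b) ∧ (a = b ∨ b ≠ w) := by
      induction e using Sym2.ind with
      | _ a b =>
        by_cases hb : b = w
        · by_cases hab : a = b
          · exact ⟨a, b, rfl, .inl hab⟩
          · exact ⟨b, a, Sym2.eq_swap, .inr (by rintro rfl; exact hab hb.symm)⟩
        · exact ⟨a, b, rfl, .inr hb⟩
    by_cases hab : a = b
    · subst hab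
      rw [fl_loop, fl_loop, ih M' y z hM' hsep' hy hz]
    have hb := hb.resolve_left hab
    have hk := hsep a b (by simp)
    have hA : ∀ u, (u ∈ A ∨ u = w) → (mg b a u ∈ A ∨ mg b a u = w) := by
      intro u hu
      unfold mg
      split_ifs with h
      · subst h; tauto
      · exact hu
    have hB : ∀ u, (u ∉ A ∨ u = w) → (mg b a u ∉ A ∨ mg b a u = w) := by
      intro u hu
      unfold mg
      split_ifs with h
      · subst h; tauto
      · exact hu
    rw [fl_contract q _ (Ne.symm hab), fl_contract q _ (Ne.symm hab), ih M' y z hM' hsep' hy hz]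
    simp only [Multiset.map_cons, Sym2.map_mk]
    have hw : mg b a w = w := by simp [mg, Ne.symm hb]
    rw [hw, ih (M'.map (Sym2.map (mg b a))) (mg b a y) (mg b a z) (by simpa using hM') _
      (hA y hy) (hB z hz)]
    · ring
    · intro c d hcd
      obtain ⟨x, hx, hx2⟩ := Multiset.mem_map.1 hcd
      induction x using Sym2.ind with
      | _ p r =>
        have h1 := hsep' p r hx
        have a1 := hA p
        have a2 := hA r
        have b1 := hB p
        have b2 := hB r
        rw [Sym2.map_mk] at hx2
        rcases Sym2.eq_iff.1 hx2 with ⟨rfl, rfl⟩ | ⟨rfl, rfl⟩ <;> rcases h1 with ⟨h1, h2⟩ | ⟨h1, h2⟩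
        · exact .inl ⟨a1 h1, a2 h2⟩
        · exact .inr ⟨b1 h1, b2 h2⟩
        · exact .inl ⟨a2 h2, a1 h1⟩
        · exact .inr ⟨b2 h2, b1 h1⟩

open Classical in
/-- Number of edges leaving `X`. -/
noncomputable def cut {V : Type} (M : Multiset (Sym2 V)) (X : Set V) : ℕ :=
  M.countP fun e => ∃ a b, e = s(a, b) ∧ a ∈ X ∧ b ∉ X

theorem cross_iff {V : Type} (X : Set V) (a b : V) :
    (∃ c d, s(a, b) = s(c, d) ∧ c ∈ X ∧ d ∉ X) ↔ ¬ (a ∈ X ↔ b ∈ X) := by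
  constructor
  · rintro ⟨c, d, h, hc, hd⟩
    rcases Sym2.eq_iff.1 h with ⟨rfl, rfl⟩ | ⟨rfl, rfl⟩ <;> tauto
  · intro h
    by_cases ha : a ∈ X
    · exact ⟨a, b, rfl, ha, by tauto⟩
    · exact ⟨b, a, Sym2.eq_swap, by tauto, ha⟩

open Classical in
theorem cut_cons {V : Type} (M : Multiset (Sym2 V)) (X : Set V) (a b : V) :
    cut (s(a, b) ::ₘ M) X = cut M X + if (a ∈ X ↔ b ∈ X) then 0 else 1 := by
  unfold cut
  rw [Multiset.countP_cons]
  simp only [cross_iff]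
  split_ifs <;> simp_all

theorem cut_eq_zero {V : Type} (M : Multiset (Sym2 V)) (X : Set V) :
    cut M X = 0 ↔ ∀ a b, s(a, b) ∈ M → (a ∈ X ↔ b ∈ X) := by
  classical
  unfold cut
  rw [Multiset.countP_eq_zero]
  constructor
  · intro h a b hab
    have := h _ hab
    rw [cross_iff] at this
    tauto
  · intro h e he
    induction e using Sym2.ind with
    | _ a b =>
      rw [cross_iff]
      have := h a b he
      tauto

theorem cut_map {V : Type} (M : Multiset (Sym2 V)) (X : Set V) (f : V → V) :
    cut (M.map (Sym2.map f)) X = cut M (f ⁻¹' X) := by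
  classical
  induction M using Multiset.induction_on with
  | empty => simp [cut]
  | cons e M ih =>
    induction e using Sym2.ind with
    | _ a b =>
      rw [Multiset.map_cons, Sym2.map_mk, cut_cons, cut_cons, ih]
      rfl

theorem cut_congr {V : Type} (M : Multiset (Sym2 V)) {x : V} (hx : ∀ y, s(x, y) ∉ M)
    (X Y : Set V) (h : ∀ u, u ≠ x → (u ∈ X ↔ u ∈ Y)) : cut M X = cut M Y := by
  classical
  induction M using Multiset.induction_on with
  | empty => simp [cut]
  | cons e M ih =>
    induction e using Sym2.ind with
    | _ a b =>
      have ha : a ≠ x := by rintro rfl; exact hx b (by simp)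
      have hb : b ≠ x := by rintro rfl; exact hx a (by simp [Sym2.eq_swap])
      rw [cut_cons, cut_cons, ih (fun y hy => hx y (Multiset.mem_cons_of_mem hy)), h a ha, h b hb]

open Classical in
/-- Contribution of an edge to the degree of `v`. -/
noncomputable def dgE {V : Type} (v : V) : Sym2 V → ℕ :=
  Sym2.lift ⟨fun a b => (if a = v then 1 else 0) + (if b = v then 1 else 0),
    fun _ _ => Nat.add_comm _ _⟩

/-- Degree. -/
noncomputable def dg {V : Type} (M : Multiset (Sym2 V)) (v : V) : ℕ := (M.map (dgE v)).sum

open Classical in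
theorem dg_cons {V : Type} (M : Multiset (Sym2 V)) (v a b : V) :
    dg (s(a, b) ::ₘ M) v = (if a = v then 1 else 0) + (if b = v then 1 else 0) + dg M v := by
  simp [dg, dgE]

theorem dg_eq_zero {V : Type} {M : Multiset (Sym2 V)} {v : V} (h : dg M v = 0) (y : V) :
    s(v, y) ∉ M := by
  intro hy
  obtain ⟨M', rfl⟩ := Multiset.exists_cons_of_mem hy
  rw [dg_cons] at h
  simp at h

theorem exists_of_dg {V : Type} {M : Multiset (Sym2 V)} {v : V} (h : dg M v ≠ 0) :
    ∃ y M', M = s(v, y) ::ₘ M' := by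
  by_contra hc
  push Not at hc
  apply h
  have : ∀ y, s(v, y) ∉ M := fun y hy =>
    hc y _ (Multiset.exists_cons_of_mem hy).choose_spec
  clear hc h
  induction M using Multiset.induction_on with
  | empty => simp [dg]
  | cons e M ih =>
    induction e using Sym2.ind with
    | _ a b =>
      have ha : a ≠ v := by rintro rfl; exact this b (by simp)
      have hb : b ≠ v := by rintro rfl; exact this a (by simp [Sym2.eq_swap])
      rw [dg_cons, ih (fun y hy => this y (Multiset.mem_cons_of_mem hy))]
      simp [ha, hb]

theorem dg_map {V : Type} (M : Multiset (Sym2 V)) {x w v : V} (hw : v ≠ w) (hx : v ≠ x) :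
    dg (M.map (Sym2.map (mg x w))) v = dg M v := by
  classical
  induction M using Multiset.induction_on with
  | empty => simp [dg]
  | cons e M ih =>
    induction e using Sym2.ind with
    | _ a b =>
      rw [Multiset.map_cons, Sym2.map_mk, dg_cons, dg_cons, ih]
      have : ∀ u, (mg x w u = v) = (u = v) := by
        intro u
        unfold mg
        split_ifs with h
        · subst h; simp [hw.symm, hx.symm]
        · rfl
      simp only [this]

theorem dg_map_self {V : Type} (M : Multiset (Sym2 V)) {x w : V} (hw : x ≠ w) :
    dg (M.map (Sym2.map (mg x w))) x = 0 := by
  classical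
  induction M using Multiset.induction_on with
  | empty => simp [dg]
  | cons e M ih =>
    induction e using Sym2.ind with
    | _ a b =>
      rw [Multiset.map_cons, Sym2.map_mk, dg_cons, ih]
      have : ∀ u, mg x w u ≠ x := by
        intro u
        unfold mg
        split_ifs with h
        · exact hw.symm
        · exact h
      simp [this]

/-- The hypotheses of the main induction. -/
structure Good {V : Type} (w : V) (M : Multiset (Sym2 V)) : Prop where
  bl : ∀ X, cut M X ≠ 1
  deg : ∀ v, v ≠ w → dg M v ≤ 3
  conn : ∀ X : Set V, w ∉ X → cut M X = 0 → ∀ v ∈ X, dg M v = 0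

theorem Good.map {V : Type} {w : V} {M : Multiset (Sym2 V)} (h : Good w M) {x : V} (hx : x ≠ w) :
    Good w (M.map (Sym2.map (mg x w))) where
  bl X := by rw [cut_map]; exact h.bl _
  deg v hv := by
    by_cases hvx : v = x
    · subst hvx; rw [dg_map_self M hv]; omega
    · rw [dg_map M hv hvx]; exact h.deg v hv
  conn X hw hX v hv := by
    rw [cut_map] at hX
    by_cases hvx : v = x
    · subst hvx; exact dg_map_self M hx
    · rw [dg_map M (by rintro rfl; exact hw hv) hvx]
      exact h.conn _ (by simp [mg, hx.symm, hw]) hX v (by simp [mg, hvx, hv])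

theorem Good.loop {V : Type} {w : V} {M : Multiset (Sym2 V)} (h : Good w (s(w, w) ::ₘ M)) :
    Good w M where
  bl X := by
    have := h.bl X
    rw [cut_cons] at this
    simpa using this
  deg v hv := by
    have := h.deg v hv
    rw [dg_cons] at this
    omega
  conn X hw hX v hv := by
    have := h.conn X hw (by rw [cut_cons]; simpa using hX) v hv
    rw [dg_cons] at this
    omega

theorem fl_of_cut {V : Type} [Fintype V] (q : ℝ) {M : Multiset (Sym2 V)} {X : Set V}
    (h : cut M X = 1) : fl q M = 0 := by
  classical
  have : ¬ (∀ a b, s(a, b) ∈ M → (a ∈ X ↔ b ∈ X)) := by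
    rw [← cut_eq_zero]; omega
  push Not at this
  obtain ⟨a, b, hab, hx⟩ := this
  obtain ⟨M', rfl⟩ := Multiset.exists_cons_of_mem hab
  have hx' : ¬ (a ∈ X ↔ b ∈ X) := by tauto
  rw [cut_cons, if_neg hx'] at h
  have h0 := (cut_eq_zero M' X).1 (by omega)
  by_cases ha : a ∈ X
  · rw [Sym2.eq_swap]
    exact fl_bridge q M' X ha (by tauto) h0
  · exact fl_bridge q M' X (by tauto : b ∈ X) ha h0

open Classical in
/-- Number of components after making edges at `w` inactive. -/
noncomputable def nb {V : Type} (w : V) (M : Multiset (Sym2 V)) : ℕ :=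
  nc (M.filter fun e => w ∉ e)

open Classical in
/-- Sign exponent. -/
noncomputable def ep {V : Type} [Fintype V] (w : V) (M : Multiset (Sym2 V)) : ℕ :=
  M.card + nb w M + M.count s(w, w) + Fintype.card V

theorem nb_w {V : Type} (w y : V) (M : Multiset (Sym2 V)) : nb w (s(w, y) ::ₘ M) = nb w M := by
  simp [nb]

theorem ep_w {V : Type} [Fintype V] (w y : V) (hy : y ≠ w) (M : Multiset (Sym2 V)) :
    ep w (s(w, y) ::ₘ M) = ep w M + 1 := by
  classical
  unfold ep
  rw [nb_w, Multiset.card_cons, Multiset.count_cons_of_ne]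
  · ring
  · simp [hy.symm]

theorem ep_loop {V : Type} [Fintype V] (w : V) (M : Multiset (Sym2 V)) :
    ep w (s(w, w) ::ₘ M) = ep w M + 2 := by
  classical
  unfold ep
  rw [nb_w, Multiset.card_cons, Multiset.count_cons_self]
  ring

theorem ep_ne {V : Type} [Fintype V] (w x y : V) (hx : x ≠ w) (hy : y ≠ w)
    (M : Multiset (Sym2 V)) :
    ep w (s(x, y) ::ₘ M) + nb w M = ep w M + nb w (s(x, y) ::ₘ M) + 1 := by
  classical
  unfold ep
  rw [Multiset.card_cons, Multiset.count_cons_of_ne]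
  · ring
  · simp [hx.symm]

theorem nb_leaf {V : Type} [Fintype V] (w x y : V) (hx : x ≠ w) (hy : y ≠ w) (hxy : y ≠ x)
    {M : Multiset (Sym2 V)} (hxM : ∀ y, s(x, y) ∉ M) :
    nb w (s(x, y) ::ₘ M) + 1 = nb w M := by
  classical
  unfold nb
  rw [Multiset.filter_cons_of_pos _ (by simp [hx.symm, hy.symm])]
  exact nc_leaf _ (fun y hy => hxM y (Multiset.mem_of_mem_filter hy)) hxy

theorem nb_series {V : Type} [Fintype V] (w x y z : V) (hx : x ≠ w) (hy : y ≠ w) (hz : z ≠ w)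
    (hxy : y ≠ x) (hxz : z ≠ x) {M : Multiset (Sym2 V)} (hxM : ∀ y, s(x, y) ∉ M) :
    nb w (s(x, y) ::ₘ s(x, z) ::ₘ M) + 1 = nb w (s(y, z) ::ₘ M) := by
  classical
  unfold nb
  rw [Multiset.filter_cons_of_pos _ (by simp [hx.symm, hy.symm]),
    Multiset.filter_cons_of_pos _ (by simp [hx.symm, hz.symm]),
    Multiset.filter_cons_of_pos _ (by simp [hy.symm, hz.symm])]
  exact nc_series _ (fun y hy => hxM y (Multiset.mem_of_mem_filter hy)) hxy hxz

theorem sgn_same {a b : ℕ} (h : a % 2 = b % 2) : (-1 : ℝ) ^ a = (-1) ^ b := by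
  rw [neg_one_pow_eq_pow_mod_two, h, ← neg_one_pow_eq_pow_mod_two]

theorem sgn_opp {a b : ℕ} (h : (a + 1) % 2 = b % 2) : (-1 : ℝ) ^ a = - (-1) ^ b := by
  rw [← sgn_same h, pow_succ]; ring

/-- The reduction at a cubic neighbour. -/
theorem Good.split {V : Type} {w x y z : V} {N : Multiset (Sym2 V)}
    (hx : x ≠ w) (hy : y ≠ x) (hz : z ≠ x) (hN : dg N x = 0)
    (h : Good w (s(w, x) ::ₘ s(x, y) ::ₘ s(x, z) ::ₘ N))
    (hbl : ∀ X, cut (s(y, z) ::ₘ N) X ≠ 1) : Good w (s(y, z) ::ₘ N) where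
  bl := hbl
  deg v hv := by
    have := h.deg v hv
    simp only [dg_cons] at this ⊢
    omega
  conn X hw hX v hv := by
    classical
    have hxN := dg_eq_zero hN
    have hyz : y ∈ X ↔ z ∈ X := by
      rw [cut_cons] at hX
      by_contra hc
      rw [if_neg hc] at hX
      omega
    have hN0 : cut N X = 0 := by
      rw [cut_cons] at hX
      omega
    set Y : Set V := {u | (u = x ∧ y ∈ X) ∨ (u ≠ x ∧ u ∈ X)} with hY
    have hNY : cut N Y = 0 := by
      rw [← hN0]
      apply cut_congr N hxN
      intro u hu
      simp [hY, hu]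
    have hwY : w ∉ Y := by simp [hY, hx.symm, hw]
    have hxY : x ∈ Y ↔ y ∈ X := by simp [hY]
    have hyY : y ∈ Y ↔ y ∈ X := by simp [hY, hy]
    have hzY : z ∈ Y ↔ y ∈ X := by simp [hY, hz, hyz]
    have hc : cut (s(w, x) ::ₘ s(x, y) ::ₘ s(x, z) ::ₘ N) Y = if y ∈ X then 1 else 0 := by
      simp only [cut_cons, hxY, hyY, hzY, hNY, hwY]
      by_cases hyX : y ∈ X
      · simp [hyX]
      · simp [hyX]
    have hyX : y ∉ X := by
      intro hyX
      rw [if_pos hyX] at hc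
      exact h.bl _ hc
    rw [if_neg hyX] at hc
    by_cases hvx : v = x
    · subst hvx
      rw [dg_cons, hN]
      simp [hy, hz]
    · have := h.conn Y hwY hc v (by simp [hY, hvx, hv])
      simp only [dg_cons] at this ⊢
      omega

theorem main {V : Type} [Fintype V] {q : ℝ} (h1 : 1 < q) (h2 : q < 2) (w : V) (n : ℕ) :
    ∀ M : Multiset (Sym2 V), M.card = n → Good w M → 0 < (-1) ^ ep w M * fl q M := by
  classical
  induction n using Nat.strong_induction_on with
  | _ n ih =>
  intro M hMn hG
  by_cases hw0 : dg M w = 0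
  · have hM0 : M = 0 := by
      by_contra hne
      obtain ⟨e, he⟩ := Multiset.exists_mem_of_ne_zero hne
      induction e using Sym2.ind with
      | _ a b =>
        have hwM := dg_eq_zero hw0
        have ha : a ≠ w := by rintro rfl; exact hwM _ he
        have := hG.conn {w}ᶜ (by simp) ((cut_eq_zero _ _).2 (by
          intro c d hcd
          have := isolated_closed M hwM c d hcd
          simp only [Set.mem_compl_iff]
          tauto)) a ha
        exact dg_eq_zero this _ he
    subst hM0
    have : ep w (0 : Multiset (Sym2 V)) = 2 * Fintype.card V := by
      simp [ep, nb, nc_zero]; ring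
    rw [this, pow_mul]
    simp [fl]
    positivity
  obtain ⟨x, M', rfl⟩ := exists_of_dg hw0
  rw [Multiset.card_cons] at hMn
  by_cases hxw : x = w
  · subst hxw
    have := ih M'.card (by omega) M' rfl hG.loop
    rw [ep_loop, fl_loop, pow_add]
    have h3 := mul_pos (sub_pos.2 h1) this
    linarith
  have hdx := hG.deg x hxw
  rw [dg_cons, if_neg (Ne.symm hxw), if_pos rfl] at hdx
  by_cases hx0 : dg M' x = 0
  · exfalso
    apply hG.bl {x}
    rw [cut_cons, (cut_eq_zero _ _).2 (isolated_closed M' (dg_eq_zero hx0))]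
    simp [Ne.symm hxw]
  obtain ⟨y, M'', rfl⟩ := exists_of_dg hx0
  rw [dg_cons, if_pos rfl] at hdx
  by_cases hyx : y = x
  · exfalso
    subst hyx
    rw [if_pos rfl] at hdx
    apply hG.bl {y}
    rw [cut_cons, cut_cons, (cut_eq_zero _ _).2 (isolated_closed M'' (dg_eq_zero (by omega)))]
    simp [Ne.symm hxw]
  rw [if_neg hyx] at hdx
  have hGm := hG.map hxw
  rw [Multiset.map_cons, Multiset.map_cons, Sym2.map_mk, Sym2.map_mk] at hGm
  have mgx : mg x w x = w := by simp [mg]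
  have mgw : mg x w w = w := by simp [mg]
  have mgy : mg x w y = y := by simp [mg, hyx]
  rw [mgx, mgw, mgy] at hGm
  have hGm := hGm.loop
  rw [Multiset.card_cons] at hMn
  by_cases hx0 : dg M'' x = 0
  · have hxM := dg_eq_zero hx0
    rw [map_mg_eq M'' hxM] at hGm
    have := ih (M''.card + 1) (by omega) _ (Multiset.card_cons _ _) hGm
    have hfl : fl q (s(w, x) ::ₘ s(x, y) ::ₘ M'') = fl q (s(w, y) ::ₘ M'') := by
      rw [Sym2.eq_swap, fl_series q M'' hxM (Ne.symm hxw) hyx]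
    rw [hfl]
    have hs : (-1 : ℝ) ^ ep w (s(w, x) ::ₘ s(x, y) ::ₘ M'') = (-1) ^ ep w (s(w, y) ::ₘ M'') := by
      apply sgn_same
      rw [ep_w w x hxw]
      by_cases hyw : y = w
      · subst hyw
        rw [Sym2.eq_swap, ep_w y x hxw, ep_loop]
      · rw [ep_w w y hyw]
        have e1 := ep_ne w x y hxw hyw M''
        have e2 := nb_leaf w x y hxw hyw hyx hxM
        omega
    rw [hs]
    exact this
  obtain ⟨z, N, rfl⟩ := exists_of_dg hx0
  rw [dg_cons, if_pos rfl] at hdx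
  have hzx : z ≠ x := by
    rintro rfl
    rw [if_pos rfl] at hdx
    omega
  have hN0 : dg N x = 0 := by omega
  have hxN := dg_eq_zero hN0
  have mgz : mg x w z = z := by simp [mg, hzx]
  rw [Multiset.map_cons, Sym2.map_mk, mgx, mgz, map_mg_eq N hxN] at hGm
  rw [Multiset.card_cons] at hMn
  have hfl : fl q (s(w, x) ::ₘ s(x, y) ::ₘ s(x, z) ::ₘ N) =
      fl q (s(w, y) ::ₘ s(w, z) ::ₘ N) - fl q (s(y, z) ::ₘ N) := by
    rw [fl_contract q _ hxw, fl_series q N hxN hyx hzx]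
    simp only [Multiset.map_cons, Sym2.map_mk, mgx, mgy, mgz, map_mg_eq N hxN]
  have hloop : ∀ z', z' ≠ x → Good w (s(w, w) ::ₘ s(w, z') ::ₘ N) →
      0 < (-1) ^ ep w (s(w, x) ::ₘ s(x, w) ::ₘ s(x, z') ::ₘ N) *
        (fl q (s(w, w) ::ₘ s(w, z') ::ₘ N) - fl q (s(w, z') ::ₘ N)) := by
    intro z' hz'x hg
    have := ih (N.card + 1) (by omega) _ (Multiset.card_cons _ _) hg.loop
    rw [fl_loop]
    have hs : (-1 : ℝ) ^ ep w (s(w, x) ::ₘ s(x, w) ::ₘ s(x, z') ::ₘ N) =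
        - (-1) ^ ep w (s(w, z') ::ₘ N) := by
      apply sgn_opp
      rw [ep_w w x hxw, Sym2.eq_swap (a := x) (b := w), ep_w w x hxw]
      by_cases hzw : z' = w
      · subst hzw
        rw [Sym2.eq_swap, ep_w z' x hxw, ep_loop]
        omega
      · rw [ep_w w z' hzw]
        have e1 := ep_ne w x z' hxw hzw N
        have e2 := nb_leaf w x z' hxw hzw hz'x hxN
        omega
    rw [hs]
    have h3 := mul_pos (sub_pos.2 h2) this
    linarith
  by_cases hyw : y = w
  · subst hyw
    rw [hfl]
    exact hloop z hzx hGm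
  by_cases hzw : z = w
  · subst hzw
    rw [hfl, Multiset.cons_swap s(x, y), Multiset.cons_swap s(z, y), Sym2.eq_swap (a := y)]
    rw [Multiset.cons_swap] at hGm
    exact hloop y hyx hGm
  have ih1 := ih (N.card + 2) (by omega) _ (by simp) hGm
  have e0 := ep_ne w x y hxw hyw (s(x, z) ::ₘ N)
  have e1 := ep_ne w x z hxw hzw N
  have e2 := nb_series w x y z hxw hyw hzw hyx hzx hxN
  have e3 := ep_w w x hxw (s(x, y) ::ₘ s(x, z) ::ₘ N)
  have e4 := ep_w w y hyw (s(w, z) ::ₘ N)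
  have e5 := ep_w w z hzw N
  have e6 := ep_ne w y z hyw hzw N
  rw [hfl]
  set K := N.filter fun e => w ∉ e with hK
  have hnb : nb w (s(y, z) ::ₘ N) = nc (s(y, z) ::ₘ K) := by
    unfold nb
    rw [Multiset.filter_cons_of_pos _ (by simp [Ne.symm hyw, Ne.symm hzw])]
  have hnb0 : nb w N = nc K := rfl
  by_cases hyz : Relation.EqvGen (rel K) y z
  · have e7 := nc_conn K hyz
    have hs1 : (-1 : ℝ) ^ ep w (s(w, x) ::ₘ s(x, y) ::ₘ s(x, z) ::ₘ N) =
        (-1) ^ ep w (s(w, y) ::ₘ s(w, z) ::ₘ N) := sgn_same (by omega)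
    have hs2 : (-1 : ℝ) ^ ep w (s(w, x) ::ₘ s(x, y) ::ₘ s(x, z) ::ₘ N) =
        - (-1) ^ ep w (s(y, z) ::ₘ N) := sgn_opp (by omega)
    have ih2 : 0 ≤ (-1) ^ ep w (s(y, z) ::ₘ N) * fl q (s(y, z) ::ₘ N) := by
      by_cases hbl : ∀ X, cut (s(y, z) ::ₘ N) X ≠ 1
      · exact (ih (N.card + 1) (by omega) _ (Multiset.card_cons _ _)
          (hG.split hxw hyx hzx hN0 hbl)).le
      · push Not at hbl
        obtain ⟨X, hX⟩ := hbl
        rw [fl_of_cut q hX, mul_zero]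
    rw [mul_sub]
    nth_rw 1 [hs1]
    rw [hs2]
    linarith
  · have hKsep : nc (s(y, z) ::ₘ K) + 1 = nc K := by
      rw [Sym2.eq_swap]
      exact nc_sep K _ (.refl y) hyz (comp_closed K y)
    have hs1 : (-1 : ℝ) ^ ep w (s(w, x) ::ₘ s(x, y) ::ₘ s(x, z) ::ₘ N) =
        - (-1) ^ ep w (s(w, y) ::ₘ s(w, z) ::ₘ N) := sgn_opp (by omega)
    have hD := fl_twosum q w {u | Relation.EqvGen (rel K) y u} N.card N y z rfl (by
      intro a b hab
      by_cases ha : a = w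
      · by_cases hb : b ∈ {u | Relation.EqvGen (rel K) y u} <;> tauto
      by_cases hb : b = w
      · by_cases ha : a ∈ {u | Relation.EqvGen (rel K) y u} <;> tauto
      have := comp_closed K y a b (Multiset.mem_filter.2 ⟨hab, by
        simp [Ne.symm ha, Ne.symm hb]⟩)
      tauto) (.inl (.refl y)) (.inl hyz)
    rw [hs1]
    rw [hD] at ih1 ⊢
    have hq : 0 < q - 1 := by linarith
    have h4 : 0 < (-1) ^ ep w (s(w, y) ::ₘ s(w, z) ::ₘ N) * fl q (s(y, z) ::ₘ N) := by
      have : 0 < (q - 1) * ((-1) ^ ep w (s(w, y) ::ₘ s(w, z) ::ₘ N) * fl q (s(y, z) ::ₘ N)) := by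
        linarith
      exact (mul_pos_iff_of_pos_left hq).1 this
    have h5 := mul_pos (sub_pos.2 h2) h4
    linarith

theorem fl_ne_zero {V : Type} [Fintype V] {q : ℝ} (h1 : 1 < q) (h2 : q < 2) (w : V) (n : ℕ) :
    ∀ M : Multiset (Sym2 V), {v | v ≠ w ∧ dg M v ≠ 0}.ncard = n → (∀ X, cut M X ≠ 1) →
      (∀ v, v ≠ w → dg M v ≤ 3) → fl q M ≠ 0 := by
  classical
  induction n using Nat.strong_induction_on with
  | _ n ih =>
  intro M hn hbl hdeg
  by_cases hconn : ∀ X : Set V, w ∉ X → cut M X = 0 → ∀ v ∈ X, dg M v = 0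
  · have := main h1 h2 w M.card M rfl ⟨hbl, hdeg, hconn⟩
    intro h0
    rw [h0, mul_zero] at this
    exact lt_irrefl _ this
  · push Not at hconn
    obtain ⟨X, hw, hX, v, hv, hd⟩ := hconn
    have hvw : v ≠ w := by rintro rfl; exact hw hv
    rw [← fl_merge q M X hv hw ((cut_eq_zero _ _).1 hX)]
    refine ih _ ?_ _ rfl ?_ ?_
    · rw [← hn]
      apply Set.ncard_lt_ncard _ (Set.toFinite _)
      constructor
      · rintro u ⟨hu, hu2⟩
        have huv : u ≠ v := by
          rintro rfl
          exact hu2 (dg_map_self M hu)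
        rw [dg_map M hu huv] at hu2
        exact ⟨hu, hu2⟩
      · intro hsub
        exact (hsub ⟨hvw, hd⟩).2 (dg_map_self M hvw)
    · intro Y
      rw [cut_map]
      exact hbl _
    · intro u hu
      by_cases huv : u = v
      · subst huv
        rw [dg_map_self M hu]
        omega
      · rw [dg_map M hu huv]
        exact hdeg u hu

/-- The edge multiset of a set of edges. -/
def ms {V E : Type} (G : Multigraph V E) (T : Finset E) : Multiset (Sym2 V) :=
  T.val.map fun e => s(G.fst e, G.snd e)

theorem ncomp_eq {V E : Type} (G : Multigraph V E) (T : Finset E) :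
    G.ncomp ↑T = nc (ms G T) := by
  unfold Multigraph.ncomp nc Multigraph.reachSetoid
  have : G.edgeRelOn ↑T = rel (ms G T) := by
    funext a b
    simp [Multigraph.edgeRelOn, rel, ms]
  rw [this]

theorem powerset_val {E : Type} (s : Finset E) :
    s.powerset.val.map Finset.val = s.val.powerset := by
  have h : ∀ (P : Multiset (Multiset E)) (H : ∀ t ∈ P, t.Nodup),
      (P.pmap Finset.mk H).map Finset.val = P := by
    intro P H
    rw [Multiset.map_pmap]
    exact (Multiset.pmap_eq_map (fun t : Multiset E => t.Nodup) (fun t => t) P H).trans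
      (Multiset.map_id' P)
  exact h _ _

theorem fl_flowPoly {V E : Type} [Fintype V] [Fintype E] (G : Multigraph V E) (q : ℝ) :
    q ^ Fintype.card V * G.flowPoly.eval q = fl q (ms G Finset.univ) := by
  have hF : G.flowPoly = ∑ E' : Finset E, (-1 : Polynomial ℝ) ^ (Nat.card E - E'.card) *
      Polynomial.X ^ (E'.card + G.ncomp ↑E' - Nat.card V) := by
    unfold Multigraph.flowPoly
    apply Finset.sum_congr
    · ext; simp
    · intros; rfl
  rw [hF, Polynomial.eval_finsetSum, Finset.mul_sum]
  unfold fl ms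
  rw [powerset_map', ← powerset_val, Multiset.map_map, Multiset.map_map, Multiset.card_map]
  rw [← Multiset.sum_map_mul_left]
  change _ = ∑ T ∈ Finset.univ.powerset, _
  rw [Finset.powerset_univ]
  apply Finset.sum_congr rfl
  intro T _
  have hc : (ms G T).card = T.card := by simp [ms]
  have h1 := card_le_nc (ms G T)
  rw [hc] at h1
  change _ = (-1) ^ (Finset.univ : Finset E).card *
    ((-1) ^ (ms G T).card * q ^ ((ms G T).card + nc (ms G T)))
  rw [hc, ncomp_eq]
  simp only [Polynomial.eval_mul, Polynomial.eval_pow, Polynomial.eval_neg, Polynomial.eval_one,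
    Polynomial.eval_X, Nat.card_eq_fintype_card, Finset.card_univ]
  have hT : T.card ≤ Fintype.card E := Finset.card_le_univ T
  have e1 : (-1 : ℝ) ^ (Fintype.card E - T.card) = (-1) ^ (Fintype.card E + T.card) :=
    sgn_same (by omega)
  have e2 : T.card + nc (ms G T) =
    Fintype.card V + (T.card + nc (ms G T) - Fintype.card V) := by omega
  rw [e1]
  nth_rw 2 [e2]
  rw [pow_add, pow_add]
  ring

theorem dg_ms {V E : Type} [Fintype V] [Fintype E] (G : Multigraph V E) (v : V) :
    dg (ms G Finset.univ) v = G.degree v := by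
  classical
  unfold dg ms Multigraph.degree
  rw [Multiset.map_map]
  change ∑ e : E, ((if G.fst e = v then 1 else 0) + (if G.snd e = v then 1 else 0)) = _
  rw [Finset.sum_add_distrib]
  simp [Finset.sum_boole, Fintype.card_subtype]

theorem bl_ms {V E : Type} [Fintype V] [Fintype E] (G : Multigraph V E) (h : G.Bridgeless)
    (X : Set V) : cut (ms G Finset.univ) X ≠ 1 := by
  classical
  intro hX
  have : ¬ (∀ a b, s(a, b) ∈ ms G Finset.univ → (a ∈ X ↔ b ∈ X)) := by
    rw [← cut_eq_zero]; omega
  have : ∃ e, ¬ (G.fst e ∈ X ↔ G.snd e ∈ X) := by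
    by_contra hc
    push Not at hc
    apply this
    intro a b hab
    obtain ⟨e, _, he⟩ := Multiset.mem_map.1 hab
    rcases Sym2.eq_iff.1 he with ⟨rfl, rfl⟩ | ⟨rfl, rfl⟩ <;> have := hc e <;> tauto
  obtain ⟨e, he⟩ := this
  apply h e
  have hm : ms G Finset.univ = s(G.fst e, G.snd e) ::ₘ ms G (Finset.univ.erase e) := by
    unfold ms
    have hc : (Finset.univ : Finset E).val = e ::ₘ (Finset.univ.erase e).val := by
      rw [Finset.erase_val, Multiset.cons_erase (Finset.mem_univ e)]
    rw [hc, Multiset.map_cons]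
  rw [hm, cut_cons, if_neg he] at hX
  have h0 := (cut_eq_zero _ _).1 (by omega : cut (ms G (Finset.univ.erase e)) X = 0)
  have e1 : G.numComponents = nc (ms G Finset.univ) := by
    rw [← ncomp_eq]; simp [Multigraph.numComponents]
  have e2 : G.ncomp {e' | e' ≠ e} = nc (ms G (Finset.univ.erase e)) := by
    rw [← ncomp_eq]
    congr 1
    ext; simp
  unfold Multigraph.IsBridge
  rw [e1, e2, hm]
  by_cases ha : G.fst e ∈ X
  · have := nc_sep _ X ha (by tauto : G.snd e ∉ X) h0
    rw [Sym2.eq_swap]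
    omega
  · have := nc_sep _ X (by tauto : G.snd e ∈ X) ha h0
    omega

end FlowAux

open Multigraph in
/-- Jackson. If `G` is a bridgeless finite multigraph with at most
one vertex of degree larger than `3`, then `G` has no flow root in `(1,2)`. -/
theorem flowPoly_ne_zero_of_at_most_one_big_degree {V E : Type} [Fintype V] [Fintype E]
    (G : Multigraph V E) (hbl : G.Bridgeless)
    (hW : {v | 3 < G.degree v}.ncard ≤ 1) :
    ∀ q : ℝ, 1 < q → q < 2 → G.flowPoly.eval q ≠ 0 := by
  intro q h1 h2 h0
  have hf := FlowAux.fl_flowPoly G q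
  rw [h0, mul_zero] at hf
  have key : ∀ w : V, (∀ v, v ≠ w → G.degree v ≤ 3) → False := fun w hw =>
    FlowAux.fl_ne_zero h1 h2 w _ _ rfl (FlowAux.bl_ms G hbl)
      (fun v hv => by rw [FlowAux.dg_ms]; exact hw v hv) hf.symm
  rcases isEmpty_or_nonempty V with hV | ⟨⟨v0⟩⟩
  · have : FlowAux.ms G Finset.univ = 0 := by
      rw [Multiset.eq_zero_iff_forall_notMem]
      intro e
      induction e using Sym2.ind with
      | _ a b => exact (hV.false a).elim
    rw [this] at hf
    simp [FlowAux.fl, FlowAux.nc_zero] at hf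
  · by_cases hb : ∃ w, 3 < G.degree w
    · obtain ⟨w, hw⟩ := hb
      apply key w
      intro v hv
      by_contra hc
      exact hv ((Set.ncard_le_one (Set.toFinite _)).1 hW v (not_le.1 hc) w hw)
    · push Not at hb
      exact key v0 fun v _ => hb v
end
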